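/- arXiv:1806.02798 — 3 statements merged into one kernel-verified Lean document; each statement's English description precedes it below -/
import Mathlib

section
/- Let Ŵ denote the set of walk lifts ξ of configurations η ∈ X such that min{x ∈ ℤ : ξ(x) = 0} = 0 (Record 0 at the origin). If ξ, ξ′ ∈ Ŵ satisfy M_k ξ = M_k ξ′ for every k ≥ 1, then ξ = ξ′; that is, the slot decomposition map ξ ↦ (M_k ξ)_{k≥1} is injective on Ŵ and a configuration can be reconstructed from its components. -/
open MeasureTheory Filter Finset

/-- A ball configuration: a box at each integer, occupied (`true`) or empty (`false`). -/
abbrev Cfg := ℤ → Bool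

/-- Numerical (integer) value of a box. -/
def valZ (b : Bool) : ℤ := if b then 1 else 0

/-- Numerical (real) value of a box. -/
def valR (b : Bool) : ℝ := if b then 1 else 0

/-- `x` is a record of the configuration `η`:
for every `z ≤ x`, the number of balls in `[z,x]` is strictly smaller than the
number of empty boxes in `[z,x]`. -/
def isRecord (η : Cfg) (x : ℤ) : Prop :=
  ∀ z ≤ x, (∑ y ∈ Finset.Icc z x, valZ (η y)) < ∑ y ∈ Finset.Icc z x, (1 - valZ (η y))

open Classical in
/-- The box-ball (Takahashi–Satsuma) operator `T`. -/
noncomputable def bbsT (η : Cfg) : Cfg := fun x => if isRecord η x then false else !(η x)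

/-- `η` has asymptotic density `lam` of balls on both half lines. -/
def inXlam (lam : ℝ) (η : Cfg) : Prop :=
  Tendsto (fun y : ℕ => (∑ x ∈ Finset.Icc (-(y : ℤ)) 0, valR (η x)) / (y : ℝ))
    atTop (nhds lam) ∧
  Tendsto (fun y : ℕ => (∑ x ∈ Finset.Icc (0 : ℤ) (y : ℤ), valR (η x)) / (y : ℝ))
    atTop (nhds lam)

/-- `η ∈ 𝒳`: it has a well-defined density `0 < lam < 1/2`. -/
def inX (η : Cfg) : Prop := ∃ lam : ℝ, 0 < lam ∧ lam < 1 / 2 ∧ inXlam lam η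

/-- `ξ` is a walk lift of the configuration `η`. -/
def IsLift (η : Cfg) (ξ : ℤ → ℤ) : Prop :=
  ∀ x : ℤ, ξ x - ξ (x - 1) = 2 * valZ (η x) - 1

/-- Running minimum `min_{y ≤ x} ξ(y)` of a walk. -/
noncomputable def runMin (ξ : ℤ → ℤ) (x : ℤ) : ℤ := sInf (ξ '' Set.Iic x)

/-- The box-ball operator on walks: reflection at the running minimum. -/
noncomputable def liftT (ξ : ℤ → ℤ) : ℤ → ℤ := fun x => 2 * runMin ξ x - ξ x

/-- The canonical walk lift of `η` with value `0` at the origin. -/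
noncomputable def xi0 (η : Cfg) : ℤ → ℤ := fun x =>
  if 0 ≤ x then ∑ y ∈ Finset.Icc 1 x, (2 * valZ (η y) - 1)
  else -∑ y ∈ Finset.Icc (x + 1) 0, (2 * valZ (η y) - 1)
/-- Maximal runs of a word of (position, letter) pairs. -/
def runsOf : List (ℤ × Bool) → List (List (ℤ × Bool))
  | [] => []
  | a :: l =>
    match runsOf l with
    | [] => [[a]]
    | r :: rs =>
      if (r.head?.map Prod.snd) = some a.2 then (a :: r) :: rs else [a] :: r :: rs

/-- Takahashi–Satsuma step: find the leftmost run whose length is at least the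
length of the run preceding it; the soliton consists of the preceding run
together with the first (that many) letters of the selected run. -/
def findSoliton : List (List (ℤ × Bool)) → Option (List (ℤ × Bool))
  | r1 :: r2 :: rest =>
    if r1.length ≤ r2.length then some (r1 ++ r2.take r1.length)
    else findSoliton (r2 :: rest)
  | _ => none

/-- Iterated Takahashi–Satsuma algorithm (with fuel): repeatedly identify the
soliton given by `findSoliton` and remove its letters from the word. -/
def tsAux : ℕ → List (ℤ × Bool) → List (List (ℤ × Bool))
  | 0, _ => []
  | fuel + 1, w =>
    match findSoliton (runsOf w) with
    | none => []
    | some s => s :: tsAux fuel (w.filter (fun a => !((s.map Prod.fst).contains a.1)))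

/-- The solitons identified by the Takahashi–Satsuma algorithm in a finite word. -/
def tsSolitons (w : List (ℤ × Bool)) : List (List (ℤ × Bool)) := tsAux w.length w

/-- The word (with positions) strictly between sites `y1` and `y2`. -/
def excursionWord (η : Cfg) (y1 y2 : ℤ) : List (ℤ × Bool) :=
  (List.range (y2 - y1 - 1).toNat).map fun n => (y1 + 1 + n, η (y1 + 1 + n))

/-- `Γ_k η`: the set of `k`-solitons of `η`, each identified with the set of `2k`
sites it occupies.  A `k`-soliton is obtained by applying the Takahashi–Satsuma
algorithm to an excursion of `η` (the word between two consecutive records). -/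
def Gamma (η : Cfg) (k : ℕ) : Set (Finset ℤ) :=
  {γ | ∃ y1 y2 : ℤ, y1 < y2 ∧ isRecord η y1 ∧ isRecord η y2 ∧
    (∀ z : ℤ, y1 < z → z < y2 → ¬ isRecord η z) ∧
    ∃ s ∈ tsSolitons (excursionWord η y1 y2), s.length = 2 * k ∧
      γ = (s.map Prod.fst).toFinset}

/-- The head of a soliton `γ` of `η`: the positions of its ones. -/
def headF (η : Cfg) (γ : Finset ℤ) : Finset ℤ := γ.filter fun x => η x = true

/-- The tail of a soliton `γ` of `η`: the positions of its zeros. -/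
def tailF (η : Cfg) (γ : Finset ℤ) : Finset ℤ := γ.filter fun x => η x = false
/-- `x` is a `k`-slot of `η`: either a record, or the `j`-th smallest site of the
tail or of the head of some soliton, with `j > k` (slot level `j - 1 ≥ k`). -/
def IsKSlot (η : Cfg) (k : ℕ) (x : ℤ) : Prop :=
  isRecord η x ∨ ∃ m : ℕ, ∃ γ ∈ Gamma η m,
    (x ∈ tailF η γ ∧ k < ((tailF η γ).filter fun y => y ≤ x).card) ∨
    (x ∈ headF η γ ∧ k < ((headF η γ).filter fun y => y ≤ x).card)

open Classical in
/-- Increasing enumeration of a (doubly unbounded, locally finite) set `S ⊆ ℤ`,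
normalized so that the `0`-th element is the base point `b`.  (Junk value if no
such enumeration exists.) -/
noncomputable def enumZ (S : Set ℤ) (b : ℤ) : ℤ → ℤ :=
  if h : ∃ f : ℤ → ℤ, StrictMono f ∧ f 0 = b ∧ Set.range f = S then h.choose
  else fun _ => 0

/-- Position `r(ξ,j)` of Record `j` of a walk `ξ`: leftmost site where `ξ` takes
the value `-j`. -/
noncomputable def recPos (ξ : ℤ → ℤ) (j : ℤ) : ℤ := sInf {x : ℤ | ξ x = -j}

/-- `s_k(ξ,i)`: the `i`-th `k`-slot of the configuration `η` lifted by the walk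
`ξ`, enumerated increasingly and normalized by `s_k(ξ,0) = r(ξ,0)`. -/
noncomputable def skEnum (η : Cfg) (ξ : ℤ → ℤ) (k : ℕ) : ℤ → ℤ :=
  enumZ {x : ℤ | IsKSlot η k x} (recPos ξ 0)

/-- `M_k ξ (i)`: the number of `k`-solitons appended to the `i`-th `k`-slot,
i.e. contained in `[s_k(ξ,i)+1, s_k(ξ,i+1)-1]`. -/
noncomputable def Mk (η : Cfg) (ξ : ℤ → ℤ) (k : ℕ) (i : ℤ) : ℕ :=
  Set.ncard {γ | γ ∈ Gamma η k ∧
    ∀ x ∈ γ, skEnum η ξ k i < x ∧ x < skEnum η ξ k (i + 1)}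

open Classical in
/-- The trajectory `γ^t` of a tagged `k`-soliton `γ` of `η`: `γ^0 = γ` and
`γ^{t+1}` is the `k`-soliton of `T^{t+1} η` whose head is the tail of `γ^t`. -/
noncomputable def solTraj (η : Cfg) (k : ℕ) (γ : Finset ℤ) : ℕ → Finset ℤ
  | 0 => γ
  | t + 1 =>
    if h : ∃ γ' ∈ Gamma (bbsT^[t + 1] η) k,
        headF (bbsT^[t + 1] η) γ' = tailF (bbsT^[t] η) (solTraj η k γ t)
    then h.choose else ∅

/-- `J_m^t ξ`: the flow of `m`-solitons through Record `0` by time `t`. -/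
noncomputable def Jflow (η : Cfg) (ξ : ℤ → ℤ) (m : ℕ) (t : ℕ) : ℕ :=
  Set.ncard {γ | γ ∈ Gamma η m ∧ (∀ x ∈ γ, x < recPos ξ 0) ∧
    ∀ x ∈ solTraj η m γ t, recPos (liftT^[t] ξ) 0 ≤ x}

/-- `o_k^t(ξ) = Σ_{m>k} 2(m-k)·J_m^t ξ`: the flow of `k`-slots through Record
`0` by time `t`, counted as the number of pairs (an `m`-soliton `γ` with `m > k`
crossing Record `0` by time `t`, a site of `γ` of slot level `≥ k`); each such
`γ` carries exactly `2(m-k)` such sites. -/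
noncomputable def oOff (η : Cfg) (ξ : ℤ → ℤ) (k : ℕ) (t : ℕ) : ℕ :=
  Set.ncard {p : Finset ℤ × ℤ | ∃ m : ℕ, k < m ∧ p.1 ∈ Gamma η m ∧
    (∀ x ∈ p.1, x < recPos ξ 0) ∧
    (∀ x ∈ solTraj η m p.1 t, recPos (liftT^[t] ξ) 0 ≤ x) ∧
    ((p.2 ∈ tailF η p.1 ∧ k < ((tailF η p.1).filter fun y => y ≤ p.2).card) ∨
     (p.2 ∈ headF η p.1 ∧ k < ((headF η p.1).filter fun y => y ≤ p.2).card))}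

/-- The relabeled `i`-th `k`-slot at time `t`:
`s_k^t(ξ,i) = s_k(T^t ξ, o_k^t(ξ) + i)`. -/
noncomputable def skEnumT (η : Cfg) (ξ : ℤ → ℤ) (k : ℕ) (t : ℕ) (i : ℤ) : ℤ :=
  skEnum (bbsT^[t] η) (liftT^[t] ξ) k ((oOff η ξ k t : ℤ) + i)


namespace SlotRec

/-- A run on the stack: its letter and its positions (in increasing order). -/
abbrev Run := Bool × List ℤ

/-- A stack of runs, top first. -/
abbrev Stk := List Run

def toRun (r : Run) : List (ℤ × Bool) := r.2.map fun u => (u, r.1)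

def push : Stk → ℤ × Bool → Stk
  | [], a => [(a.2, [a.1])]
  | r :: rest, a => if r.1 = a.2 then (r.1, r.2 ++ [a.1]) :: rest else (a.2, [a.1]) :: r :: rest

def norm : Stk → Stk
  | r1 :: r2 :: rest => if r2.2.length ≤ r1.2.length then rest else r1 :: r2 :: rest
  | st => st

def emit : Stk → Option (Run × Run)
  | r1 :: r2 :: _ => if r2.2.length ≤ r1.2.length then some (r2, r1) else none
  | _ => none

def step (st : Stk) (a : ℤ × Bool) : Stk := norm (push st a)

def emits : Stk → List (ℤ × Bool) → List (Run × Run)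
  | _, [] => []
  | st, a :: v => (emit (push st a)).toList ++ emits (step st a) v

def Alt : Stk → Prop
  | [] => True
  | [r] => r.2 ≠ []
  | r :: q :: rest => r.1 ≠ q.1 ∧ r.2 ≠ [] ∧ r.2.length < q.2.length ∧ Alt (q :: rest)

/-- like `Alt` but the top run may be as long as the one below it -/
def Alt' : Stk → Prop
  | [] => True
  | [r] => r.2 ≠ []
  | r :: q :: rest => r.1 ≠ q.1 ∧ r.2 ≠ [] ∧ r.2.length ≤ q.2.length ∧ Alt (q :: rest)

def flat (st : Stk) : List (ℤ × Bool) := (st.reverse.map toRun).flatten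

lemma flat_cons (r : Run) (st : Stk) : flat (r :: st) = flat st ++ toRun r := by
  simp [flat]

lemma flat_nil : flat [] = [] := rfl

lemma Alt.tail {r : Run} {st : Stk} (h : Alt (r :: st)) : Alt st := by
  cases st with
  | nil => trivial
  | cons q rest => exact h.2.2.2

lemma Alt.ne {r : Run} {st : Stk} (h : Alt (r :: st)) : r.2 ≠ [] := by
  cases st with
  | nil => exact h
  | cons q rest => exact h.2.1

lemma flat_push (st : Stk) (a : ℤ × Bool) : flat (push st a) = flat st ++ [a] := by
  cases st with
  | nil => simp [push, flat, toRun]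
  | cons r rest =>
    rw [push]
    split_ifs with h
    · simp only [flat_cons, toRun, List.map_append, h, List.append_assoc]; simp
    · simp only [flat_cons, toRun, List.append_assoc]; simp

lemma push_alt {st : Stk} (h : Alt st) (a : ℤ × Bool) : Alt' (push st a) := by
  cases st with
  | nil => simp [push, Alt']
  | cons r rest =>
    rw [push]
    split_ifs with hr
    · cases rest with
      | nil => simp [Alt']
      | cons q rest =>
        obtain ⟨h1, h2, h3, h4⟩ := h
        refine ⟨h1, by simp, ?_, h4⟩
        simp; omega
    · refine ⟨fun h => hr h.symm, by simp, ?_, h⟩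
      have := List.length_pos_iff.2 h.ne
      simp only [List.length_singleton]; exact this

lemma norm_alt {st : Stk} (h : Alt' st) : Alt (norm st) := by
  match st, h with
  | [], _ => trivial
  | [r], h => exact h
  | r :: q :: rest, h =>
    obtain ⟨h1, h2, h3, h4⟩ := h
    rw [norm]
    split_ifs with hl
    · exact h4.tail
    · exact ⟨h1, h2, by omega, h4⟩

lemma step_alt {st : Stk} (h : Alt st) (a : ℤ × Bool) : Alt (step st a) := norm_alt (push_alt h a)

lemma norm_of_emit_none {st : Stk} (h : emit st = none) : norm st = st := by
  match st, h with
  | [], _ => rfl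
  | [r], h => rfl
  | r :: q :: rest, h =>
    rw [emit] at h
    split_ifs at h with hl
    simp [norm, hl]

lemma emit_some {st : Stk} (hA : Alt' st) {s : Run × Run} (h : emit st = some s) :
    ∃ rest, st = s.2 :: s.1 :: rest ∧ norm st = rest ∧ s.2.2.length = s.1.2.length := by
  match st, h with
  | r :: q :: rest, h =>
    rw [emit] at h
    split_ifs at h with hl
    obtain ⟨h1, h2, h3, h4⟩ := hA
    simp only [Option.some.injEq] at h
    subst h
    exact ⟨rest, rfl, by simp [norm, hl], le_antisymm h3 hl⟩

lemma runsOf_ne_nil (a : ℤ × Bool) (l) : runsOf (a :: l) ≠ [] := by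
  unfold runsOf
  split
  · simp
  · split_ifs <;> simp

lemma runsOf_head (a : ℤ × Bool) (l) : ∃ t rs, runsOf (a :: l) = (a :: t) :: rs := by
  conv => enter [1, t, 1, rs]; rw [runsOf]
  split
  · exact ⟨[], [], rfl⟩
  · split_ifs
    · exact ⟨_, _, rfl⟩
    · exact ⟨_, _, rfl⟩

lemma runsOf_prefix (b : Bool) (l : List ℤ) (hl : l ≠ []) (w : List (ℤ × Bool)) :
    ∃ t rs, runsOf (toRun (b, l) ++ w) = (toRun (b, l) ++ t) :: rs := by
  induction l with
  | nil => exact absurd rfl hl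
  | cons u l ih =>
    cases l with
    | nil => exact runsOf_head _ _
    | cons u' l =>
      obtain ⟨t, rs, h⟩ := ih (by simp)
      refine ⟨t, rs, ?_⟩
      simp only [toRun, List.map_cons, List.cons_append] at h ⊢
      rw [runsOf, h]
      simp

lemma runsOf_run (b c : Bool) (l l' : List ℤ) (hl : l ≠ []) (hl' : l' ≠ []) (hbc : c ≠ b)
    (w : List (ℤ × Bool)) :
    runsOf (toRun (b, l) ++ (toRun (c, l') ++ w)) =
      toRun (b, l) :: runsOf (toRun (c, l') ++ w) := by
  induction l with
  | nil => exact absurd rfl hl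
  | cons u l ih =>
    cases l with
    | nil =>
      obtain ⟨t, rs, h⟩ := runsOf_prefix c l' hl' w
      simp only [toRun, List.map_cons, List.cons_append, List.map_nil, List.nil_append] at h ⊢
      rw [runsOf, h]
      cases l' with
      | nil => exact absurd rfl hl'
      | cons x l' => simp [hbc]
    | cons u' l =>
      have h := ih (by simp)
      simp only [toRun, List.map_cons, List.cons_append] at h ⊢
      rw [runsOf, h]
      simp

/-- runs of a flattened stack followed by something -/
lemma runsOf_flat (rest : Stk) (r : Run) (hA : Alt rest) (hr : r.2 ≠ [])
    (hne : ∀ q ∈ rest.head?, r.1 ≠ q.1) (w : List (ℤ × Bool)) :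
    runsOf (flat rest ++ (toRun r ++ w)) =
      rest.reverse.map toRun ++ runsOf (toRun r ++ w) := by
  induction rest generalizing r w with
  | nil => simp [flat]
  | cons q rest ih =>
    rw [flat_cons, List.append_assoc, ih q hA.tail hA.ne _ (toRun r ++ w)]
    · obtain ⟨b, l⟩ := r
      obtain ⟨c, l'⟩ := q
      rw [runsOf_run c b l' l hA.ne hr (hne (c, l') (by simp))]
      simp
    · intro q' hq'
      cases rest with
      | nil => simp at hq'
      | cons a b =>
        simp at hq'
        subst hq'
        exact hA.1

lemma findSoliton_skip (rs : List (List (ℤ × Bool))) (x y : List (ℤ × Bool)) (tl)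
    (h : (rs ++ [x]).Pairwise (fun a b => b.length < a.length)) :
    findSoliton (rs ++ x :: y :: tl) = findSoliton (x :: y :: tl) := by
  induction rs with
  | nil => rfl
  | cons r rs ih =>
    have h' := ih (List.pairwise_cons.1 h).2
    cases rs with
    | nil =>
      simp at h
      simp only [List.cons_append, List.nil_append]
      rw [findSoliton, if_neg (by omega)]
    | cons r' rs =>
      have h2 := (List.pairwise_cons.1 h).1 r' (by simp)
      simp only [List.cons_append] at h' ⊢
      rw [findSoliton, if_neg (by omega), h']

lemma findSoliton_none (rs : List (List (ℤ × Bool)))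
    (h : rs.Pairwise (fun a b => b.length < a.length)) : findSoliton rs = none := by
  induction rs with
  | nil => rfl
  | cons r rs ih =>
    cases rs with
    | nil => rfl
    | cons r' rs =>
      have h2 := (List.pairwise_cons.1 h).1 r' (by simp)
      rw [findSoliton, if_neg (by omega)]
      exact ih (List.pairwise_cons.1 h).2

lemma alt_pairwise {st : Stk} (h : Alt st) :
    st.Pairwise (fun a b => a.2.length < b.2.length) := by
  induction st with
  | nil => simp
  | cons r rest ih =>
    refine List.pairwise_cons.2 ⟨?_, ih h.tail⟩
    intro q hq
    cases rest with
    | nil => simp at hq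
    | cons q' rest =>
      have h3 := h.2.2.1
      rcases List.mem_cons.1 hq with rfl | hq
      · exact h3
      · exact h3.trans ((List.pairwise_cons.1 (ih h.tail)).1 q hq)

lemma alt_pairwise' {st : Stk} (h : Alt st) :
    (st.reverse.map toRun).Pairwise (fun a b => b.length < a.length) := by
  rw [List.pairwise_map, List.pairwise_reverse]
  simpa [toRun] using alt_pairwise h

lemma tsAux_eq (v : List (ℤ × Bool)) : ∀ (fuel : ℕ) (st : Stk), Alt st →
    ((flat st ++ v).map Prod.fst).Nodup → (flat st ++ v).length ≤ fuel →
    tsAux fuel (flat st ++ v) = (emits st v).map (fun s => toRun s.1 ++ toRun s.2) := by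
  induction v with
  | nil =>
    intro fuel st hA hnd0 hf
    cases fuel with
    | zero => simp [tsAux, emits]
    | succ fuel =>
      have h : findSoliton (runsOf (flat st ++ [])) = none := by
        apply findSoliton_none
        cases st with
        | nil => simp [flat, runsOf]
        | cons r rest =>
          rw [flat_cons, List.append_assoc, runsOf_flat rest r hA.tail hA.ne]
          · have : runsOf (toRun r ++ []) = [toRun r] := by
              have hr := hA.ne
              obtain ⟨b, l⟩ := r
              clear hA hf hnd0
              induction l with
              | nil => exact absurd rfl hr
              | cons u l ih =>
                cases l with
                | nil => rfl
                | cons u' l =>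
                  have h := ih (by simp)
                  simp only [toRun, List.map_cons, List.cons_append] at h ⊢
                  rw [runsOf, h]
                  simp
            rw [this]
            simpa using alt_pairwise' hA
          · intro q' hq'
            cases rest with
            | nil => simp at hq'
            | cons a b =>
              simp at hq'
              subst hq'
              exact hA.1
      rw [tsAux, h]
      simp [emits]
  | cons a v ih =>
    intro fuel st hA hnd hf
    have hP := push_alt hA a
    have hW : flat st ++ a :: v = flat (push st a) ++ v := by
      rw [flat_push]; simp
    cases he : emit (push st a) with
    | none =>
      have h1 : step st a = push st a := norm_of_emit_none he
      rw [emits, he, h1, hW]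
      simp only [Option.toList_none, List.nil_append]
      rw [hW] at hnd hf
      exact ih fuel _ (h1 ▸ step_alt hA a) hnd hf
    | some s =>
      obtain ⟨rest, h1, h2, h3⟩ := emit_some hP he
      have h4 : step st a = rest := h2
      have hA' : Alt rest := h4 ▸ step_alt hA a
      rw [hW, h1] at hnd hf ⊢
      rw [emits, he, h4]
      obtain ⟨⟨b1, l1⟩, ⟨b2, l2⟩⟩ := s
      rw [h1] at hP
      obtain ⟨p1, p2, p3, p4⟩ := hP
      simp only at p1 p2 p3 h3
      have hl1 : l1 ≠ [] := p4.ne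
      cases fuel with
      | zero =>
        exfalso
        simp [flat_cons, toRun] at hf
        exact hl1 (by simp [hf])
      | succ fuel =>
      have hfl : flat ((b2, l2) :: (b1, l1) :: rest) ++ v =
          flat rest ++ (toRun (b1, l1) ++ (toRun (b2, l2) ++ v)) := by
        simp [flat_cons]
      have hfind : findSoliton (runsOf (flat ((b2, l2) :: (b1, l1) :: rest) ++ v)) =
          some (toRun (b1, l1) ++ toRun (b2, l2)) := by
        rw [hfl, runsOf_flat rest (b1, l1) hA' hl1, runsOf_run b1 b2 l1 l2 hl1 p2 p1]
        · obtain ⟨t, rs, ht⟩ := runsOf_prefix b2 l2 p2 v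
          rw [ht, findSoliton_skip]
          · rw [findSoliton, if_pos (by simp [toRun, h3])]
            rw [List.take_append_of_le_length (by simp [toRun, h3])]
            rw [List.take_of_length_le (by simp [toRun, h3])]
          · have := alt_pairwise' p4
            simpa using this
        · intro q' hq'
          cases rest with
          | nil => simp at hq'
          | cons a b =>
            simp at hq'
            subst hq'
            exact p4.1
      rw [tsAux, hfind]
      simp only [Option.toList_some, List.cons_append, List.nil_append, List.map_cons]
      congr 1
      rw [hfl] at hnd hf ⊢
      have hfilt : (flat rest ++ (toRun (b1, l1) ++ (toRun (b2, l2) ++ v))).filter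
          (fun a => !(((toRun (b1, l1) ++ toRun (b2, l2)).map Prod.fst).contains a.1)) =
          flat rest ++ v := by
        have e1 : (toRun (b1, l1) ++ toRun (b2, l2)).map Prod.fst = l1 ++ l2 := by
          simp [toRun, Function.comp_def]
        rw [e1]
        simp only [List.map_append] at hnd
        have e2 : ∀ b l, (toRun (b, l)).map Prod.fst = l := by
          intro b l; simp [toRun, Function.comp_def]
        rw [e2, e2] at hnd
        simp only [List.nodup_append, List.mem_append] at hnd
        obtain ⟨n1, ⟨n2, ⟨n3, n4, n5⟩, n6⟩, n7⟩ := hnd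
        simp only [List.filter_append]
        have f1 : ∀ w : List (ℤ × Bool), (∀ a ∈ w, a.1 ∉ l1 ++ l2) →
            w.filter (fun a => !((l1 ++ l2).contains a.1)) = w := by
          intro w hw
          rw [List.filter_eq_self]
          intro a ha
          simpa using hw a ha
        have f2 : ∀ w : List (ℤ × Bool), (∀ a ∈ w, a.1 ∈ l1 ++ l2) →
            w.filter (fun a => !((l1 ++ l2).contains a.1)) = [] := by
          intro w hw
          rw [List.filter_eq_nil_iff]
          intro a ha
          simpa [or_iff_not_imp_left] using hw a ha
        rw [f1 (flat rest), f1 v, f2 (toRun (b1, l1)), f2 (toRun (b2, l2))]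
        · simp
        · intro a ha
          simp [toRun] at ha
          obtain ⟨x, hx, rfl⟩ := ha
          simp [hx]
        · intro a ha
          simp [toRun] at ha
          obtain ⟨x, hx, rfl⟩ := ha
          simp [hx]
        · intro a ha h
          have hm : a.1 ∈ v.map Prod.fst := List.mem_map_of_mem ha
          rcases List.mem_append.1 h with h | h
          · exact n6 _ h _ (Or.inr hm) rfl
          · exact n5 _ h _ hm rfl
        · intro a ha h
          have hm : a.1 ∈ (flat rest).map Prod.fst := List.mem_map_of_mem ha
          rcases List.mem_append.1 h with h | h
          · exact n7 _ hm _ (Or.inl h) rfl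
          · exact n7 _ hm _ (Or.inr (Or.inl h)) rfl
      rw [hfilt]
      apply ih fuel rest hA'
      · have hsub : (flat rest ++ v).Sublist
            (flat rest ++ (toRun (b1, l1) ++ (toRun (b2, l2) ++ v))) := by
          rw [← hfilt]; exact List.filter_sublist
        exact hnd.sublist (hsub.map _)
      · have := List.length_pos_iff.2 hl1
        simp [toRun] at hf ⊢
        omega

end SlotRec

namespace SlotRec

def topLen : Stk → ℕ
  | [] => 0
  | r :: _ => r.2.length

def Bot : Stk → Prop
  | [] => True
  | [r] => r.1 = true
  | _ :: q :: rest => Bot (q :: rest)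

def sgn (b : Bool) : ℤ := if b then 1 else -1

def ssum : Stk → ℤ
  | [] => 0
  | r :: rest => sgn r.1 * r.2.length + ssum rest

def sig (k : ℕ) : Stk → Bool
  | [] => false
  | r :: rest => if k < r.2.length then r.1 else sig k rest

def tau (k : ℕ) : Stk → Prop
  | [] => False
  | r :: rest => r.2.length = k + 1 ∨ tau k rest

lemma Bot.tail {r : Run} {st : Stk} (h : Bot (r :: st)) : Bot st := by
  cases st with
  | nil => trivial
  | cons q rest => exact h

lemma norm_bot {st : Stk} (h : Bot st) : Bot (norm st) := by
  match st, h with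
  | [], _ => trivial
  | [r], h => exact h
  | r :: q :: rest, h =>
    rw [norm]
    split_ifs
    · exact h.tail.tail
    · exact h

lemma push_bot {st : Stk} (h : Bot st) (a : ℤ × Bool) (h0 : st = [] → a.2 = true) :
    Bot (push st a) := by
  cases st with
  | nil => simpa [push, Bot] using h0 rfl
  | cons r rest =>
    rw [push]
    split_ifs with hr
    · cases rest with
      | nil => exact h
      | cons q rest => exact h
    · exact h

lemma ssum_push (st : Stk) (a : ℤ × Bool) : ssum (push st a) = ssum st + sgn a.2 := by
  cases st with
  | nil => simp [push, ssum]
  | cons r rest =>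
    rw [push]
    split_ifs with hr
    · simp [ssum, hr]; ring
    · simp [ssum]; ring

lemma sgn_ne {b c : Bool} (h : b ≠ c) : sgn b = - sgn c := by
  cases b <;> cases c <;> simp_all [sgn]

lemma ssum_norm {st : Stk} (h : Alt' st) : ssum (norm st) = ssum st := by
  match st, h with
  | [], _ => rfl
  | [r], h => rfl
  | r :: q :: rest, h =>
    obtain ⟨h1, h2, h3, h4⟩ := h
    rw [norm]
    split_ifs with hl
    · have : r.2.length = q.2.length := le_antisymm h3 hl
      simp [ssum, this, sgn_ne h1]
    · rfl

lemma ssum_pos {st : Stk} (hA : Alt st) (hB : Bot st) :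
    ∀ r ∈ st.head?, 0 < ssum st ∧ (r.1 = true → (r.2.length : ℤ) ≤ ssum st) := by
  induction st with
  | nil => simp
  | cons r rest ih =>
    intro r' hr'
    simp at hr'
    subst hr'
    have hl := List.length_pos_iff.2 hA.ne
    cases rest with
    | nil =>
      have : r.1 = true := hB
      simp [ssum, this, sgn]
      exact hl
    | cons q rest =>
      have ⟨i1, i2⟩ := ih hA.tail hB.tail q (by simp)
      have h1 := hA.1
      have h3 := hA.2.2.1
      rw [ssum]
      cases hr : r.1
      · have hq : q.1 = true := by
          rw [hr] at h1; cases hq : q.1 <;> simp_all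
        have := i2 hq
        simp [sgn]; omega
      · simp [sgn]; omega

lemma ssum_nonneg {st : Stk} (hA : Alt st) (hB : Bot st) : 0 ≤ ssum st := by
  cases st with
  | nil => simp [ssum]
  | cons r rest => exact (ssum_pos hA hB r (by simp)).1.le

lemma eq_nil_of_ssum {st : Stk} (hA : Alt st) (hB : Bot st) (h : ssum st ≤ 0) : st = [] := by
  cases st with
  | nil => rfl
  | cons r rest => exact absurd (ssum_pos hA hB r (by simp)).1 (by omega)

lemma bool_alt {a b c : Bool} (h1 : a ≠ b) (h2 : b ≠ c) : a = c := by
  cases a <;> cases b <;> cases c <;> simp_all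

lemma sig_of_lt {k : ℕ} {r : Run} {rest : Stk} (h : k < r.2.length) :
    sig k (r :: rest) = r.1 := by simp [sig, h]

lemma sig_of_le {k : ℕ} {r : Run} {rest : Stk} (h : r.2.length ≤ k) :
    sig k (r :: rest) = sig k rest := by simp [sig, h]

/-- the letter above the top of an alternating stack -/
lemma sig_below {k : ℕ} {r : Run} {rest : Stk} (hA : Alt (r :: rest)) (hB : Bot (r :: rest))
    (h : k ≤ r.2.length) : sig k rest = !r.1 := by
  cases rest with
  | nil =>
    have : r.1 = true := hB
    simp [sig, this]
  | cons q rest =>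
    obtain ⟨h1, h2, h3, h4⟩ := hA
    rw [sig_of_lt (by omega)]
    revert h1; cases r.1 <;> cases q.1 <;> simp

lemma sig_norm {k : ℕ} {st : Stk} (hA : Alt' st) (hB : Bot st) :
    sig k (norm st) = sig k st := by
  match st, hA with
  | [], _ => rfl
  | [r], h => rfl
  | r :: q :: rest, h =>
    obtain ⟨h1, h2, h3, h4⟩ := h
    rw [norm]
    split_ifs with hl
    · have hlen : r.2.length = q.2.length := le_antisymm h3 hl
      by_cases hk : k < r.2.length
      · rw [sig_of_lt hk, sig_below h4 hB.tail (by omega)]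
        revert h1; cases r.1 <;> cases q.1 <;> simp
      · rw [sig_of_le (by omega), sig_of_le (by omega)]
    · rfl

lemma sig_push_lt {k : ℕ} {st : Stk} {a : ℤ × Bool} (h : k < topLen (push st a)) :
    sig k (push st a) = a.2 := by
  cases st with
  | nil => simp [push, topLen] at h; simp [push, sig, h]
  | cons r rest =>
    rw [push] at h ⊢
    split_ifs at h ⊢ with hr
    · rw [sig_of_lt h]; exact hr
    · rw [sig_of_lt h]

lemma sig_push_le {k : ℕ} {st : Stk} {a : ℤ × Bool} (h : topLen (push st a) ≤ k) :
    sig k (push st a) = sig k st := by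
  cases st with
  | nil => simp [push, topLen] at h; simp [push, sig]; omega
  | cons r rest =>
    rw [push] at h ⊢
    split_ifs at h ⊢ with hr
    · rw [sig_of_le h, sig_of_le]
      simp [topLen] at h; omega
    · rw [sig_of_le h]

lemma sig_old_eq {k : ℕ} {st : Stk} {a : ℤ × Bool} (hA : Alt st) (hB : Bot st)
    (h0 : st = [] → a.2 = true) (h : topLen (push st a) = k + 1) :
    sig k st = !a.2 := by
  cases st with
  | nil => simp [sig, h0 rfl]
  | cons r rest =>
    rw [push] at h
    split_ifs at h with hr
    · simp [topLen] at h
      rw [sig_of_le (by omega), sig_below hA hB (by omega), hr]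
    · simp [topLen] at h
      have := List.length_pos_iff.2 hA.ne
      rw [sig_of_lt (by omega)]
      revert hr; cases r.1 <;> cases a.2 <;> simp

lemma sig_old_lt {k : ℕ} {st : Stk} {a : ℤ × Bool} (h : k + 1 < topLen (push st a)) :
    sig k st = a.2 := by
  cases st with
  | nil => simp [push, topLen] at h
  | cons r rest =>
    rw [push] at h
    split_ifs at h with hr
    · simp [topLen] at h
      rw [sig_of_lt (by omega), hr]
    · simp [topLen] at h

lemma tau_of_lt {k : ℕ} {st : Stk} (hA : Alt st) (h : ∀ r ∈ st.head?, k + 1 < r.2.length) :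
    ¬ tau k st := by
  induction st with
  | nil => simp [tau]
  | cons r rest ih =>
    have hr := h r (by simp)
    rw [tau]
    rintro (h1 | h1)
    · omega
    · refine ih hA.tail ?_ h1
      intro q hq
      cases rest with
      | nil => simp at hq
      | cons q' rest =>
        simp at hq; subst hq
        have := hA.2.2.1
        omega

lemma tau_below {k : ℕ} {r : Run} {rest : Stk} (hA : Alt (r :: rest))
    (h : k + 1 ≤ r.2.length) : ¬ tau k rest := by
  apply tau_of_lt hA.tail
  intro q hq
  cases rest with
  | nil => simp at hq
  | cons q' rest =>
    simp at hq; subst hq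
    have := hA.2.2.1
    omega

lemma tau_step_lt {k : ℕ} {st : Stk} {a : ℤ × Bool} (hA : Alt st)
    (h : k + 1 < topLen (push st a)) : ¬ tau k (step st a) := by
  have hP := push_alt hA a
  have hN := step_alt hA a
  unfold step at hN ⊢
  generalize push st a = pst at *
  match pst, hP with
  | [], _ => simp [topLen] at h
  | [r], _ => simp [topLen] at h; simp [norm, tau]; omega
  | r :: q :: rest, hP =>
    obtain ⟨h1, h2, h3, h4⟩ := hP
    simp [topLen] at h
    have e := tau_below h4 (k := k) (by omega)
    rw [norm]
    split_ifs with hl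
    · exact e
    · simp only [tau]
      rintro (h | h | h)
      · omega
      · omega
      · exact e h

lemma tau_step_gt {k : ℕ} {st : Stk} {a : ℤ × Bool} (hA : Alt st)
    (h : topLen (push st a) < k + 1) : tau k (step st a) ↔ tau k st := by
  have hP := push_alt hA a
  have h1 : tau k (push st a) ↔ tau k st := by
    cases st with
    | nil => simp [push, topLen] at h; simp [push, tau]; omega
    | cons r rest =>
      rw [push] at h ⊢
      split_ifs at h ⊢ with hr
      · simp [topLen] at h
        simp only [tau]
        have e1 : ¬ (r.2 ++ [a.1]).length = k + 1 := by simp; omega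
        have e2 : ¬ r.2.length = k + 1 := by omega
        tauto
      · simp [topLen] at h
        simp only [tau]
        have e1 : ¬ [a.1].length = k + 1 := by simp; omega
        tauto
  rw [← h1]
  unfold step
  generalize push st a = pst at *
  match pst, hP with
  | [], _ => rfl
  | [r], _ => rfl
  | r :: q :: rest, hP =>
    obtain ⟨h1, h2, h3, h4⟩ := hP
    simp [topLen] at h
    rw [norm]
    split_ifs with hl
    · simp only [tau]
      have e1 : ¬ r.2.length = k + 1 := by omega
      have e2 : ¬ q.2.length = k + 1 := by omega
      tauto
    · rfl

lemma tau_step_eq {k : ℕ} {st : Stk} {a : ℤ × Bool} (hA : Alt st)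
    (h : topLen (push st a) = k + 1) :
    (tau k (step st a) ↔ ¬ tau k st) ∧ (¬ tau k (step st a) ↔ ∃ s, emit (push st a) = some s) := by
  have hP := push_alt hA a
  have hst : tau k st ↔ tau k (push st a).tail := by
    cases st with
    | nil => simp [push, tau]
    | cons r rest =>
      rw [push] at h ⊢
      split_ifs at h ⊢ with hr
      · simp [topLen] at h
        simp only [tau, List.tail_cons]
        have e2 : ¬ r.2.length = k + 1 := by omega
        tauto
      · simp
  rw [hst]
  unfold step
  generalize push st a = pst at *
  match pst, hP with
  | [], _ => simp [topLen] at h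
  | [r], _ => simp [topLen] at h; simp [norm, tau, emit, h]
  | r :: q :: rest, hP =>
    obtain ⟨h1, h2, h3, h4⟩ := hP
    simp [topLen] at h
    have e := tau_below h4 (k := k) (by omega)
    simp only [norm, emit, List.tail_cons]
    split_ifs with hl
    · have e2 : q.2.length = k + 1 := by omega
      simp [tau, e2, e]
    · have e2 : ¬ q.2.length = k + 1 := by omega
      simp [tau, e2, e, h]

end SlotRec

namespace SlotRec

structure Sys (η : Cfg) (ξ : ℤ → ℤ) (St : ℤ → Stk) : Prop where
  lift : ∀ x, ξ x = ξ (x - 1) + sgn (η x)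
  rec_iff : ∀ x, isRecord η x ↔ ∀ z < x, ξ x < ξ z
  recL : ∀ x, ∃ y ≤ x, isRecord η y
  recR : ∀ x, ∃ y ≥ x, isRecord η y
  st_rec : ∀ x, isRecord η x → St x = []
  st_step : ∀ x, ¬ isRecord η x → St x = step (St (x - 1)) (x, η x)

def lvl (η : Cfg) (St : ℤ → Stk) (x : ℤ) : ℕ := topLen (push (St (x - 1)) (x, η x)) - 1

structure Core (η : Cfg) (ξ : ℤ → ℤ) (lv : ℤ → ℕ) (x : ℤ) (st : Stk) : Prop where
  bot : Bot st
  min1 : ∀ y ≤ x, ξ x - ssum st ≤ ξ y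
  min2 : ∃ y ≤ x, ξ x - ssum st = ξ y
  pos : ∀ r ∈ st, ∀ u ∈ r.2, u ≤ x ∧ η u = r.1 ∧
    ∀ w, u ≤ w → w ≤ x → ¬ isRecord η w ∧ lv w < r.2.length
  srt : ∀ r ∈ st, r.2.Pairwise (· < ·) ∧ r.2.map lv = List.range r.2.length

lemma topLen_push_pos {st : Stk} (a : ℤ × Bool) : 0 < topLen (push st a) := by
  cases st with
  | nil => simp [push, topLen]
  | cons r rest =>
    rw [push]; split_ifs <;> simp [topLen]

namespace Sys

variable {η : Cfg} {ξ : ℤ → ℤ} {St : ℤ → Stk}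

lemma topLen_eq (x : ℤ) : topLen (push (St (x - 1)) (x, η x)) = lvl η St x + 1 := by
  have := topLen_push_pos (st := St (x - 1)) (x, η x)
  unfold lvl; omega

lemma rec_induct (S : Sys η ξ St) {P : ℤ → Prop} (h0 : ∀ x, isRecord η x → P x)
    (h1 : ∀ x, ¬ isRecord η x → P (x - 1) → P x) : ∀ x, P x := by
  intro x
  obtain ⟨y, hy, hr⟩ := S.recL x
  induction x, hy using Int.leInduction with
  | base => exact h0 _ hr
  | succ n hn ih =>
    by_cases hh : isRecord η (n + 1)
    · exact h0 _ hh
    · apply h1 _ hh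
      simpa using ih

lemma nil_true (S : Sys η ξ St) {x : ℤ} (hx : ¬ isRecord η x)
    (hC : Core η ξ (lvl η St) (x - 1) (St (x - 1))) : St (x - 1) = [] → η x = true := by
  intro hs
  by_contra hb
  apply hx
  rw [S.rec_iff]
  intro z hz
  have h1 := hC.min1 z (by omega)
  rw [hs] at h1
  have h2 := S.lift x
  simp [ssum] at h1
  simp [sgn, hb] at h2
  omega

lemma core_push (S : Sys η ξ St) {x : ℤ} (hx : ¬ isRecord η x) (hA : Alt (St (x - 1)))
    (hC : Core η ξ (lvl η St) (x - 1) (St (x - 1))) :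
    Core η ξ (lvl η St) x (push (St (x - 1)) (x, η x)) := by
  have hb := push_bot hC.bot (x, η x) (S.nil_true hx hC)
  have hss := ssum_push (St (x - 1)) (x, η x)
  have hl := S.lift x
  simp only at hss
  have htop := topLen_eq (η := η) (St := St) x
  have hA' := push_alt hA (x, η x)
  refine ⟨hb, ?_, ?_, ?_, ?_⟩
  · intro y hy
    rcases eq_or_lt_of_le hy with rfl | hy
    · have h1 := ssum_nonneg (norm_alt hA') (norm_bot hb)
      rw [ssum_norm hA'] at h1
      omega
    · have := hC.min1 y (by omega)
      omega
  · obtain ⟨y, hy, h⟩ := hC.min2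
    exact ⟨y, by omega, by omega⟩
  · -- other runs
    have hpos := hC.pos
    have hext : ∀ r ∈ St (x - 1), lvl η St x < r.2.length → ∀ u ∈ r.2, u ≤ x ∧ η u = r.1 ∧
        ∀ w, u ≤ w → w ≤ x → ¬ isRecord η w ∧ lvl η St w < r.2.length := by
      intro r hr hlt u hu
      obtain ⟨p1, p2, p3⟩ := hpos r hr u hu
      refine ⟨by omega, p2, fun w hw1 hw2 => ?_⟩
      rcases eq_or_lt_of_le hw2 with rfl | hw2
      · exact ⟨hx, hlt⟩
      · exact p3 w hw1 (by omega)
    have hpw := alt_pairwise hA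
    have hne : ∀ r ∈ St (x - 1), r.2 ≠ [] := by
      clear hext hpos hA' htop hss hb hC hpw
      generalize St (x - 1) = st at *
      induction st with
      | nil => simp
      | cons r rest ih =>
        intro q hq
        rcases List.mem_cons.1 hq with rfl | hq
        · exact hA.ne
        · exact ih hA.tail q hq
    cases hst : St (x - 1) with
    | nil =>
      rw [hst] at htop
      simp only [push, topLen, List.length_singleton] at htop
      simp only [push, List.mem_singleton, forall_eq]
      refine ⟨le_refl _, trivial, fun w h1 h2 => ?_⟩
      obtain rfl := le_antisymm h2 h1
      exact ⟨hx, by simp; omega⟩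
    | cons r rest =>
      rw [hst] at htop hext hpw hpos hne
      rw [push] at htop ⊢
      split_ifs at htop ⊢ with hr
      · simp [topLen] at htop
        simp only [List.mem_cons, forall_eq_or_imp]
        constructor
        · intro u hu
          rcases List.mem_append.1 hu with hu | hu
          · obtain ⟨p1, p2, p3⟩ := hpos r (by simp) u hu
            refine ⟨by omega, p2, fun w h1 h2 => ?_⟩
            rcases eq_or_lt_of_le h2 with rfl | h2
            · exact ⟨hx, by simp; omega⟩
            · have := p3 w h1 (by omega)
              exact ⟨this.1, by simp; omega⟩
          · simp at hu
            subst hu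
            refine ⟨le_refl _, hr.symm, fun w h1 h2 => ?_⟩
            obtain rfl := le_antisymm h2 h1
            exact ⟨hx, by simp; omega⟩
        · intro q hq
          have := (List.pairwise_cons.1 hpw).1 q hq
          exact hext q (by simp [hq]) (by omega)
      · simp [topLen] at htop
        simp only [List.mem_cons, forall_eq_or_imp]
        have h' : ∀ q ∈ r :: rest, lvl η St x < q.2.length := by
          intro q hq
          have := List.length_pos_iff.2 (hne q hq)
          omega
        refine ⟨?_, ?_, ?_⟩
        · simp only [List.not_mem_nil, false_imp_iff, implies_true, and_true]
          refine ⟨le_refl _, trivial, fun w h1 h2 => ?_⟩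
          obtain rfl := le_antisymm h2 h1
          exact ⟨hx, by simp; omega⟩
        · exact hext r (by simp) (h' r (by simp))
        · intro q hq
          exact hext q (by simp [hq]) (h' q (by simp [hq]))
  · have hpos := hC.pos
    have hsrt := hC.srt
    cases hst : St (x - 1) with
    | nil =>
      rw [hst] at htop
      simp only [push, topLen, List.length_singleton] at htop
      simp [push]
      omega
    | cons r rest =>
      rw [hst] at htop hpos hsrt
      rw [push] at htop ⊢
      split_ifs at htop ⊢ with hr
      · simp [topLen] at htop
        simp only [List.mem_cons, forall_eq_or_imp]
        refine ⟨⟨?_, ?_⟩, fun q hq => hsrt q (by simp [hq])⟩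
        · rw [List.pairwise_append]
          refine ⟨(hsrt r (by simp)).1, by simp, ?_⟩
          intro u hu v hv
          have := (hpos r (by simp) u hu).1
          simp at hv
          omega
        · rw [List.map_append, (hsrt r (by simp)).2]
          simp [List.range_succ, htop]
      · simp [topLen] at htop
        intro q hq
        rcases List.mem_cons.1 hq with rfl | hq
        · simp [htop]
        · exact hsrt q hq

lemma core_norm {x : ℤ} {lv : ℤ → ℕ} {st : Stk} (hA : Alt' st) (hC : Core η ξ lv x st) :
    Core η ξ lv x (norm st) := by
  have hsub : ∀ r ∈ norm st, r ∈ st := by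
    match st, hA with
    | [], _ => simp [norm]
    | [r], h => simp [norm]
    | r :: q :: rest, h =>
      rw [norm]
      split_ifs
      · intro a ha; simp [ha]
      · intro a ha; exact ha
  refine ⟨norm_bot hC.bot, ?_, ?_, fun r hr => hC.pos r (hsub r hr),
    fun r hr => hC.srt r (hsub r hr)⟩
  · rw [ssum_norm hA]; exact hC.min1
  · rw [ssum_norm hA]; exact hC.min2

lemma inv (S : Sys η ξ St) : ∀ x, Alt (St x) ∧ Core η ξ (lvl η St) x (St x) := by
  refine S.rec_induct (P := fun x => Alt (St x) ∧ Core η ξ (lvl η St) x (St x)) ?_ ?_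
  · intro x hx
    rw [S.st_rec x hx]
    refine ⟨trivial, trivial, ?_, ⟨x, le_refl _, by simp [ssum]⟩, by simp, by simp⟩
    intro y hy
    simp only [ssum, sub_zero]
    rcases eq_or_lt_of_le hy with rfl | hy
    · exact le_refl _
    · exact ((S.rec_iff x).1 hx y hy).le
  · intro x hx ⟨hA, hC⟩
    rw [S.st_step x hx]
    exact ⟨step_alt hA _, core_norm (push_alt hA _) (S.core_push hx hA hC)⟩

lemma alt (S : Sys η ξ St) (x : ℤ) : Alt (St x) := (S.inv x).1

lemma core (S : Sys η ξ St) (x : ℤ) : Core η ξ (lvl η St) x (St x) := (S.inv x).2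

lemma pcore (S : Sys η ξ St) {x : ℤ} (hx : ¬ isRecord η x) :
    Core η ξ (lvl η St) x (push (St (x - 1)) (x, η x)) := S.core_push hx (S.alt _) (S.core _)

lemma palt (S : Sys η ξ St) (x : ℤ) : Alt' (push (St (x - 1)) (x, η x)) := push_alt (S.alt _) _

lemma rec_false (S : Sys η ξ St) {x : ℤ} (hx : isRecord η x) : η x = false := by
  have h := (S.rec_iff x).1 hx (x - 1) (by omega)
  have h2 := S.lift x
  cases hb : η x
  · rfl
  · simp [sgn, hb] at h2; omega

lemma rec_prev (S : Sys η ξ St) {x : ℤ} (hx : isRecord η x) : St (x - 1) = [] := by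
  apply eq_nil_of_ssum (S.alt _) (S.core _).bot
  obtain ⟨y, hy, h⟩ := (S.core (x - 1)).min2
  have h1 := (S.rec_iff x).1 hx y (by omega)
  have h2 := S.lift x
  simp [sgn, S.rec_false hx] at h2
  omega

/-- slots in terms of levels -/
def Slot (η : Cfg) (St : ℤ → Stk) (k : ℕ) (x : ℤ) : Prop := isRecord η x ∨ k ≤ lvl η St x

lemma sig_slot (S : Sys η ξ St) {k : ℕ} {x : ℤ} (h : Slot η St k x) : sig k (St x) = η x := by
  by_cases hx : isRecord η x
  · rw [S.st_rec x hx, S.rec_false hx]; rfl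
  · have hk := h.resolve_left hx
    rw [S.st_step x hx, step, sig_norm (S.palt x) (S.pcore hx).bot, sig_push_lt]
    rw [topLen_eq]; omega

lemma sig_nslot (S : Sys η ξ St) {k : ℕ} {x : ℤ} (h : ¬ Slot η St k x) :
    sig k (St x) = sig k (St (x - 1)) := by
  unfold Slot at h
  push Not at h
  rw [S.st_step x h.1, step, sig_norm (S.palt x) (S.pcore h.1).bot, sig_push_le]
  rw [topLen_eq]; omega

lemma sig_prev (S : Sys η ξ St) {k : ℕ} {x : ℤ} (h : Slot η St (k + 1) x) :
    sig k (St (x - 1)) = η x := by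
  by_cases hx : isRecord η x
  · rw [S.rec_prev hx, S.rec_false hx]; rfl
  · have hk := h.resolve_left hx
    rw [sig_old_lt (a := (x, η x))]
    rw [topLen_eq]; omega

lemma sig_prev' (S : Sys η ξ St) {k : ℕ} {x : ℤ} (h : Slot η St k x)
    (h' : ¬ Slot η St (k + 1) x) : sig k (St (x - 1)) = !η x := by
  unfold Slot at h h'
  push Not at h'
  have hk := h.resolve_left h'.1
  rw [sig_old_eq (a := (x, η x)) (S.alt _) (S.core _).bot (S.nil_true h'.1 (S.core _))]
  rw [topLen_eq]; omega

lemma sig_gap (S : Sys η ξ St) {k : ℕ} {x y : ℤ} (hxy : x ≤ y)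
    (h : ∀ z, x < z → z ≤ y → ¬ Slot η St k z) : sig k (St y) = sig k (St x) := by
  induction y, hxy using Int.leInduction with
  | base => rfl
  | succ n hn ih =>
    rw [S.sig_nslot (h (n + 1) (by omega) (le_refl _))]
    simp only [add_sub_cancel_right]
    exact ih fun z h1 h2 => h z h1 (by omega)

/-- consecutive `k`-slots have equal letters iff the second one is a `(k+1)`-slot -/
lemma letter_iff (S : Sys η ξ St) {k : ℕ} {x y : ℤ} (hxy : x < y) (hx : Slot η St k x)
    (hy : Slot η St k y) (h : ∀ z, x < z → z < y → ¬ Slot η St k z) :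
    η y = η x ↔ Slot η St (k + 1) y := by
  have e := S.sig_gap (k := k) (x := x) (y := y - 1) (by omega)
    (fun z h1 h2 => h z h1 (by omega))
  rw [S.sig_slot hx] at e
  by_cases hs : Slot η St (k + 1) y
  · rw [S.sig_prev hs] at e
    simp [hs, e]
  · rw [S.sig_prev' hy hs] at e
    simp only [hs, iff_false]
    rw [← e]; cases η y <;> simp

lemma tau_slot (S : Sys η ξ St) {k : ℕ} {x : ℤ} (h : Slot η St (k + 1) x) : ¬ tau k (St x) := by
  by_cases hx : isRecord η x
  · rw [S.st_rec x hx]; simp [tau]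
  · have hk := h.resolve_left hx
    rw [S.st_step x hx]
    apply tau_step_lt (S.alt _)
    rw [topLen_eq]; omega

lemma tau_nslot (S : Sys η ξ St) {k : ℕ} {x : ℤ} (h : ¬ Slot η St k x) :
    tau k (St x) ↔ tau k (St (x - 1)) := by
  unfold Slot at h
  push Not at h
  rw [S.st_step x h.1]
  apply tau_step_gt (S.alt _)
  rw [topLen_eq]; omega

lemma tau_eq (S : Sys η ξ St) {k : ℕ} {x : ℤ} (h : Slot η St k x)
    (h' : ¬ Slot η St (k + 1) x) : (tau k (St x) ↔ ¬ tau k (St (x - 1))) ∧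
      (¬ tau k (St x) ↔ ∃ s, emit (push (St (x - 1)) (x, η x)) = some s) := by
  unfold Slot at h h'
  push Not at h'
  have hk := h.resolve_left h'.1
  rw [S.st_step x h'.1]
  apply tau_step_eq (S.alt _)
  rw [topLen_eq]; omega

lemma tau_gap (S : Sys η ξ St) {k : ℕ} {x y : ℤ} (hxy : x ≤ y)
    (h : ∀ z, x < z → z ≤ y → ¬ Slot η St k z) : tau k (St y) ↔ tau k (St x) := by
  induction y, hxy using Int.leInduction with
  | base => rfl
  | succ n hn ih =>
    rw [S.tau_nslot (h (n + 1) (by omega) (le_refl _))]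
    simp only [add_sub_cancel_right]
    exact ih fun z h1 h2 => h z h1 (by omega)

lemma tau_alt (S : Sys η ξ St) {k : ℕ} {x y : ℤ} (hxy : x < y)
    (hy : Slot η St k y) (h : ∀ z, x < z → z < y → ¬ Slot η St k z)
    (hy' : ¬ Slot η St (k + 1) y) : tau k (St y) ↔ ¬ tau k (St x) := by
  have e := S.tau_gap (k := k) (x := x) (y := y - 1) (by omega)
    (fun z h1 h2 => h z h1 (by omega))
  rw [(S.tau_eq hy hy').1, e]

end Sys

end SlotRec

namespace SlotRec

def word (η : Cfg) (y : ℤ) (n : ℕ) : List (ℤ × Bool) :=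
  (List.range n).map fun i : ℕ => (y + 1 + i, η (y + 1 + i))

lemma word_succ (η : Cfg) (y : ℤ) (n : ℕ) :
    word η y (n + 1) = word η y n ++ [(y + 1 + n, η (y + 1 + n))] := by
  simp [word, List.range_succ]

lemma word_nodup (η : Cfg) (y : ℤ) (n : ℕ) : ((word η y n).map Prod.fst).Nodup := by
  simp only [word, List.map_map]
  apply List.Nodup.map _ List.nodup_range
  intro a b h
  simpa using h

lemma emits_append (st : Stk) (v w : List (ℤ × Bool)) :
    emits st (v ++ w) = emits st v ++ emits (v.foldl step st) w := by
  induction v generalizing st with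
  | nil => simp [emits]
  | cons a v ih => simp [emits, ih]

lemma mem_top (st : Stk) (a : ℤ × Bool) : ∃ r rest, push st a = r :: rest ∧ a.1 ∈ r.2 := by
  cases st with
  | nil => exact ⟨_, _, rfl, by simp⟩
  | cons r rest =>
    rw [push]; split_ifs
    · exact ⟨_, _, rfl, by simp⟩
    · exact ⟨_, _, rfl, by simp⟩

def inStk (x : ℤ) (st : Stk) : Prop := ∃ r ∈ st, x ∈ r.2

lemma inStk_push {x : ℤ} {st : Stk} (a : ℤ × Bool) (h : inStk x st) : inStk x (push st a) := by
  cases st with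
  | nil => simp [inStk] at h
  | cons r rest =>
    rw [push]; split_ifs
    · obtain ⟨q, hq, hx⟩ := h
      rcases List.mem_cons.1 hq with rfl | hq
      · exact ⟨_, List.mem_cons_self, by simp [hx]⟩
      · exact ⟨q, by simp [hq], hx⟩
    · obtain ⟨q, hq, hx⟩ := h
      exact ⟨q, List.mem_cons_of_mem _ hq, hx⟩

lemma inStk_norm {x : ℤ} {st : Stk} (h : inStk x st) :
    inStk x (norm st) ∨ ∃ s, emit st = some s ∧ (x ∈ s.1.2 ∨ x ∈ s.2.2) := by
  match st, h with
  | [], h => exact Or.inl h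
  | [r], h => exact Or.inl h
  | r :: q :: rest, h =>
    simp only [norm, emit]
    split_ifs with hl
    · obtain ⟨t, ht, hx⟩ := h
      simp only [List.mem_cons] at ht
      rcases ht with rfl | rfl | ht
      · exact Or.inr ⟨_, rfl, Or.inr hx⟩
      · exact Or.inr ⟨_, rfl, Or.inl hx⟩
      · exact Or.inl ⟨t, ht, hx⟩
    · exact Or.inl h

def posF (s : Run × Run) : Finset ℤ := (s.1.2 ++ s.2.2).toFinset

namespace Sys

variable {η : Cfg} {ξ : ℤ → ℤ} {St : ℤ → Stk}

def Em (η : Cfg) (St : ℤ → Stk) (z : ℤ) (s : Run × Run) : Prop :=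
  ¬ isRecord η z ∧ emit (push (St (z - 1)) (z, η z)) = some s

structure EmFacts (η : Cfg) (St : ℤ → Stk) (z : ℤ) (s : Run × Run) : Prop where
  len1 : s.1.2.length = lvl η St z + 1
  len2 : s.2.2.length = lvl η St z + 1
  ne : s.2.1 ≠ s.1.1
  mem : z ∈ s.2.2
  pos1 : ∀ u ∈ s.1.2, u ≤ z ∧ η u = s.1.1 ∧
    ∀ w, u ≤ w → w ≤ z → ¬ isRecord η w ∧ lvl η St w < lvl η St z + 1
  pos2 : ∀ u ∈ s.2.2, u ≤ z ∧ η u = s.2.1 ∧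
    ∀ w, u ≤ w → w ≤ z → ¬ isRecord η w ∧ lvl η St w < lvl η St z + 1
  srt1 : s.1.2.Pairwise (· < ·) ∧ s.1.2.map (lvl η St) = List.range s.1.2.length
  srt2 : s.2.2.Pairwise (· < ·) ∧ s.2.2.map (lvl η St) = List.range s.2.2.length

lemma em_facts (S : Sys η ξ St) {z : ℤ} {s : Run × Run} (h : Em η St z s) :
    EmFacts η St z s := by
  obtain ⟨hz, he⟩ := h
  obtain ⟨rest, h1, h2, h3⟩ := emit_some (S.palt z) he
  have hC := S.pcore hz
  have hA := S.palt z
  have ht := topLen_eq (η := η) (St := St) z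
  obtain ⟨r, rest', hr, hm⟩ := mem_top (St (z - 1)) (z, η z)
  rw [h1] at hC hA ht hr
  simp only [topLen] at ht
  have hr' : s.2 = r := by injection hr
  subst hr'
  have l1 : s.1.2.length = lvl η St z + 1 := by omega
  refine ⟨l1, ht, hA.1, hm, ?_, ?_, hC.srt _ (by simp), hC.srt _ (by simp)⟩
  · rw [← l1]; exact hC.pos _ (by simp)
  · rw [← ht]; exact hC.pos _ (by simp)

lemma word_facts (S : Sys η ξ St) {y : ℤ} (hy : isRecord η y) (n : ℕ)
    (h : ∀ z, y < z → z ≤ y + n → ¬ isRecord η z) :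
    (word η y n).foldl step [] = St (y + n) ∧
    ∀ s, s ∈ emits [] (word η y n) ↔
      ∃ z, y < z ∧ z ≤ y + n ∧ emit (push (St (z - 1)) (z, η z)) = some s := by
  induction n with
  | zero =>
    constructor
    · simp [word, S.st_rec y hy]
    · intro s
      simp only [word, List.range_zero, List.map_nil, emits, List.not_mem_nil, false_iff]
      rintro ⟨z, h1, h2, -⟩
      simp at h2; omega
  | succ n ih =>
    obtain ⟨i1, i2⟩ := ih fun z h1 h2 => h z h1 (by push_cast; omega)
    have e : y + ((n + 1 : ℕ) : ℤ) = y + 1 + n := by push_cast; ring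
    have hn := h (y + 1 + n) (by omega) (by rw [e])
    have e2 : y + 1 + (n : ℤ) - 1 = y + n := by ring
    rw [word_succ]
    constructor
    · rw [List.foldl_append, i1, e, S.st_step _ hn, e2]
      rfl
    · intro s
      rw [emits_append, List.mem_append, i2, i1]
      simp only [emits, List.append_nil, Option.mem_toList]
      rw [← e2]
      constructor
      · rintro (⟨z, h1, h2, h3⟩ | h)
        · exact ⟨z, h1, by push_cast; omega, h3⟩
        · exact ⟨y + 1 + n, by omega, by rw [e], h⟩
      · rintro ⟨z, h1, h2, h3⟩
        rw [e] at h2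
        rcases eq_or_lt_of_le h2 with rfl | h2
        · exact Or.inr h3
        · exact Or.inl ⟨z, h1, by omega, h3⟩

lemma last_rec (S : Sys η ξ St) (x : ℤ) :
    ∃ y ≤ x, isRecord η y ∧ ∀ z, y < z → z ≤ x → ¬ isRecord η z := by
  obtain ⟨y0, h0, hr0⟩ := S.recL x
  obtain ⟨y, ⟨hy1, hy2⟩, hmax⟩ := Int.exists_greatest_of_bdd
    (P := fun y => y ≤ x ∧ isRecord η y) ⟨x, fun z hz => hz.1⟩ ⟨y0, h0, hr0⟩
  refine ⟨y, hy1, hy2, fun z h1 h2 hz => ?_⟩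
  have := hmax z ⟨h2, hz⟩
  omega

lemma next_rec (S : Sys η ξ St) (x : ℤ) :
    ∃ y ≥ x, isRecord η y ∧ ∀ z, x ≤ z → z < y → ¬ isRecord η z := by
  obtain ⟨y0, h0, hr0⟩ := S.recR x
  obtain ⟨y, ⟨hy1, hy2⟩, hmin⟩ := Int.exists_least_of_bdd
    (P := fun y => x ≤ y ∧ isRecord η y) ⟨x, fun z hz => hz.1⟩ ⟨y0, h0, hr0⟩
  refine ⟨y, hy1, hy2, fun z h1 h2 hz => ?_⟩
  have := hmin z ⟨h1, hz⟩
  omega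

lemma gamma_iff (S : Sys η ξ St) (k : ℕ) (γ : Finset ℤ) :
    γ ∈ Gamma η k ↔ ∃ z s, Em η St z s ∧ lvl η St z + 1 = k ∧ γ = posF s := by
  have key : ∀ y1 y2, y1 < y2 → isRecord η y1 → (∀ z : ℤ, y1 < z → z < y2 → ¬ isRecord η z) →
      ∀ s', s' ∈ tsSolitons (excursionWord η y1 y2) ↔
      ∃ z s, y1 < z ∧ z < y2 ∧ Em η St z s ∧ s' = toRun s.1 ++ toRun s.2 := by
    intro y1 y2 h12 hr1 hn s'
    obtain ⟨n, hn'⟩ : ∃ n : ℕ, y2 = y1 + 1 + n := ⟨(y2 - y1 - 1).toNat, by omega⟩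
    have hw : excursionWord η y1 y2 = word η y1 n := by
      unfold excursionWord word
      have : (y2 - y1 - 1).toNat = n := by omega
      rw [this]
      simp [← List.map_eq_flatMap, Function.comp_def]
    have hf := (S.word_facts hr1 n fun z h1 h2 => hn z h1 (by omega)).2
    have ht := tsAux_eq (word η y1 n) (word η y1 n).length [] trivial
      (by simpa [flat_nil] using word_nodup η y1 n) (by simp [flat_nil])
    rw [flat_nil, List.nil_append] at ht
    rw [tsSolitons, hw, ht, List.mem_map]
    constructor
    · rintro ⟨s, hs, rfl⟩
      obtain ⟨z, h1, h2, h3⟩ := (hf s).1 hs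
      exact ⟨z, s, h1, by omega, ⟨hn z h1 (by omega), h3⟩, rfl⟩
    · rintro ⟨z, s, h1, h2, h3, rfl⟩
      exact ⟨s, (hf s).2 ⟨z, h1, by omega, h3.2⟩, rfl⟩
  have hlen : ∀ {z s}, Em η St z s → (toRun s.1 ++ toRun s.2).length = 2 * (lvl η St z + 1) := by
    intro z s h
    have h := S.em_facts h
    simp [toRun, h.len1, h.len2]; ring
  have hfst : ∀ s : Run × Run, ((toRun s.1 ++ toRun s.2).map Prod.fst).toFinset = posF s := by
    intro s
    simp [toRun, posF, Function.comp_def]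
  constructor
  · rintro ⟨y1, y2, h12, hr1, hr2, hn, s', hs', hl, rfl⟩
    obtain ⟨z, s, h1, h2, h3, rfl⟩ := (key y1 y2 h12 hr1 hn s').1 hs'
    refine ⟨z, s, h3, ?_, hfst s⟩
    rw [hlen h3] at hl
    omega
  · rintro ⟨z, s, h3, hl, rfl⟩
    obtain ⟨y1, a1, a2, a3⟩ := S.last_rec z
    obtain ⟨y2, b1, b2, b3⟩ := S.next_rec z
    have c1 : y1 ≠ z := fun h => h3.1 (h ▸ a2)
    have c2 : y2 ≠ z := fun h => h3.1 (h ▸ b2)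
    have hn : ∀ w, y1 < w → w < y2 → ¬ isRecord η w := by
      intro w h1 h2
      rcases le_total w z with h | h
      · exact a3 w h1 h
      · exact b3 w h h2
    refine ⟨y1, y2, by omega, a2, b2, hn, toRun s.1 ++ toRun s.2, ?_, ?_, (hfst s).symm⟩
    · exact (key y1 y2 (by omega) a2 hn _).2 ⟨z, s, by omega, by omega, h3, rfl⟩
    · rw [hlen h3, hl]

lemma exists_em (S : Sys η ξ St) {x : ℤ} (hx : ¬ isRecord η x) :
    ∃ z s, Em η St z s ∧ (x ∈ s.1.2 ∨ x ∈ s.2.2) := by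
  by_contra hcon
  have hno : ∀ z, ¬ isRecord η z → inStk x (push (St (z - 1)) (z, η z)) → inStk x (St z) := by
    intro z hz h
    rw [S.st_step z hz]
    rcases inStk_norm h with h | ⟨s, h1, h2⟩
    · exact h
    · exact absurd ⟨z, s, ⟨hz, h1⟩, h2⟩ hcon
  obtain ⟨y2, b1, b2, b3⟩ := S.next_rec x
  have c2 : y2 ≠ x := fun h => hx (h ▸ b2)
  have all : ∀ z, x ≤ z → z < y2 → inStk x (St z) := by
    intro z hz
    induction z, hz using Int.leInduction with
    | base =>
      intro _
      apply hno x hx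
      obtain ⟨r, rest, h, hm⟩ := mem_top (St (x - 1)) (x, η x)
      exact ⟨r, by simp [h], hm⟩
    | succ n hn ih =>
      intro h
      apply hno _ (b3 _ (by omega) h)
      apply inStk_push
      simpa using ih (by omega)
  have := all (y2 - 1) (by omega) (by omega)
  rw [S.rec_prev b2] at this
  simp [inStk] at this

lemma card_rank {l : List ℤ} {lv : ℤ → ℕ} (h : l.Pairwise (· < ·))
    (h2 : l.map lv = List.range l.length) {x : ℤ} (hx : x ∈ l) :
    (l.toFinset.filter fun y => y ≤ x).card = lv x + 1 := by
  obtain ⟨i, hi, rfl⟩ := List.mem_iff_getElem.1 hx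
  have hlv : ∀ j (hj : j < l.length), lv l[j] = j := by
    intro j hj
    have : (l.map lv)[j]'(by simpa using hj) = j := by simp [h2]
    simpa using this
  rw [hlv i hi]
  have hmono : ∀ a b (ha : a < l.length) (hb : b < l.length), a < b → l[a] < l[b] := by
    intro a b ha hb hab
    exact List.pairwise_iff_getElem.1 h a b ha hb hab
  rw [← Finset.card_range (i + 1)]
  apply Finset.card_bij (fun y _ => lv y)
  · intro y hy
    simp only [Finset.mem_filter, List.mem_toFinset] at hy
    obtain ⟨hy, hle⟩ := hy
    obtain ⟨j, hj, rfl⟩ := List.mem_iff_getElem.1 hy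
    rw [hlv j hj, Finset.mem_range]
    by_contra hc
    have := hmono i j hi hj (by omega)
    omega
  · intro a ha b hb hab
    simp only [Finset.mem_filter, List.mem_toFinset] at ha hb
    obtain ⟨j, hj, rfl⟩ := List.mem_iff_getElem.1 ha.1
    obtain ⟨j', hj', rfl⟩ := List.mem_iff_getElem.1 hb.1
    rw [hlv, hlv] at hab
    subst hab; rfl
  · intro b hb
    rw [Finset.mem_range] at hb
    have hb' : b < l.length := by omega
    refine ⟨l[b], ?_, hlv b hb'⟩
    simp only [Finset.mem_filter, List.mem_toFinset]
    refine ⟨by simp, ?_⟩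
    rcases Nat.lt_or_ge b i with h | h
    · exact (hmono b i hb' hi h).le
    · have : b = i := by omega
      subst this; exact le_refl _

lemma rank_em (S : Sys η ξ St) {z : ℤ} {s : Run × Run} (h : Em η St z s) {x : ℤ}
    (hx : x ∈ posF s) :
    (((posF s).filter fun y => η y = η x).filter fun y => y ≤ x).card = lvl η St x + 1 := by
  have h := S.em_facts h
  have hne := h.ne
  simp only [posF, List.mem_toFinset, List.mem_append] at hx
  rcases hx with hx | hx
  · have : ((posF s).filter fun y => η y = η x) = s.1.2.toFinset := by
      ext y
      simp only [posF, Finset.mem_filter, List.mem_toFinset, List.mem_append]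
      rw [(h.pos1 x hx).2.1]
      constructor
      · rintro ⟨h1 | h1, h2⟩
        · exact h1
        · rw [(h.pos2 y h1).2.1] at h2; exact absurd h2 hne
      · intro h1
        exact ⟨Or.inl h1, (h.pos1 y h1).2.1⟩
    rw [this]
    exact card_rank h.srt1.1 h.srt1.2 hx
  · have : ((posF s).filter fun y => η y = η x) = s.2.2.toFinset := by
      ext y
      simp only [posF, Finset.mem_filter, List.mem_toFinset, List.mem_append]
      rw [(h.pos2 x hx).2.1]
      constructor
      · rintro ⟨h1 | h1, h2⟩
        · rw [(h.pos1 y h1).2.1] at h2; exact absurd h2.symm hne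
        · exact h1
      · intro h1
        exact ⟨Or.inr h1, (h.pos2 y h1).2.1⟩
    rw [this]
    exact card_rank h.srt2.1 h.srt2.2 hx

lemma isKSlot_iff (S : Sys η ξ St) (k : ℕ) (x : ℤ) : IsKSlot η k x ↔ Slot η St k x := by
  unfold IsKSlot Slot
  constructor
  · rintro (h | ⟨m, γ, hγ, h⟩)
    · exact Or.inl h
    · right
      obtain ⟨z, s, hE, hl, rfl⟩ := (S.gamma_iff m γ).1 hγ
      rcases h with ⟨h1, h2⟩ | ⟨h1, h2⟩
      · simp only [tailF] at h1 h2
        obtain ⟨h1, hb⟩ := Finset.mem_filter.1 h1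
        have := S.rank_em hE h1
        rw [hb] at this
        omega
      · simp only [headF] at h1 h2
        obtain ⟨h1, hb⟩ := Finset.mem_filter.1 h1
        have := S.rank_em hE h1
        rw [hb] at this
        omega
  · rintro (h | h)
    · exact Or.inl h
    · by_cases hx : isRecord η x
      · exact Or.inl hx
      right
      obtain ⟨z, s, hE, hm⟩ := S.exists_em hx
      have hm' : x ∈ posF s := by simpa [posF] using hm
      refine ⟨lvl η St z + 1, posF s, (S.gamma_iff _ _).2 ⟨z, s, hE, rfl, rfl⟩, ?_⟩
      have := S.rank_em hE hm'
      cases hb : η x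
      · left
        rw [hb] at this
        unfold tailF
        exact ⟨Finset.mem_filter.2 ⟨hm', hb⟩, by omega⟩
      · right
        rw [hb] at this
        unfold headF
        exact ⟨Finset.mem_filter.2 ⟨hm', hb⟩, by omega⟩

/-- number of `(k+1)`-solitons in a gap between consecutive `(k+1)`-slots -/
lemma count_gap (S : Sys η ξ St) {k : ℕ} {x y : ℤ}
    (h : ∀ z, x < z → z < y → ¬ Slot η St (k + 1) z) (hx : Slot η St (k + 1) x) :
    {γ | γ ∈ Gamma η (k + 1) ∧ ∀ u ∈ γ, x < u ∧ u < y}.ncard =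
      {z | x < z ∧ z < y ∧ Slot η St k z ∧ ¬ tau k (St z)}.ncard := by
  have hEm : ∀ z ∈ {z | x < z ∧ z < y ∧ Slot η St k z ∧ ¬ tau k (St z)},
      lvl η St z = k ∧ ∃ s, Em η St z s := by
    rintro z ⟨h1, h2, h3, h4⟩
    have h5 := h z h1 h2
    have h6 := (S.tau_eq h3 h5).2.1 h4
    unfold Slot at h5 h3
    push Not at h5
    have := h3.resolve_left h5.1
    obtain ⟨s, hs⟩ := h6
    exact ⟨by omega, s, h5.1, hs⟩
  symm
  refine Set.ncard_congr (fun z hz => posF (hEm z hz).2.choose) ?_ ?_ ?_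
  · intro z hz
    have hl := (hEm z hz).1
    have hs := (hEm z hz).2.choose_spec
    set s := (hEm z hz).2.choose
    refine ⟨(S.gamma_iff _ _).2 ⟨z, s, hs, by omega, rfl⟩, ?_⟩
    have hf := S.em_facts hs
    intro u hu
    have hu' : u ≤ z ∧ ∀ w, u ≤ w → w ≤ z → ¬ isRecord η w ∧ lvl η St w < lvl η St z + 1 := by
      simp only [posF, List.mem_toFinset, List.mem_append] at hu
      rcases hu with hu | hu
      · exact ⟨(hf.pos1 u hu).1, (hf.pos1 u hu).2.2⟩
      · exact ⟨(hf.pos2 u hu).1, (hf.pos2 u hu).2.2⟩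
    obtain ⟨z1, z2, z3, z4⟩ := hz
    refine ⟨?_, by omega⟩
    by_contra hc
    have := hu'.2 x (by omega) (by omega)
    rcases hx with hx | hx
    · exact this.1 hx
    · omega
  · intro a b ha hb hab
    have h1 := (hEm a ha).2.choose_spec
    have h2 := (hEm b hb).2.choose_spec
    set s1 := (hEm a ha).2.choose
    set s2 := (hEm b hb).2.choose
    have f1 := S.em_facts h1
    have f2 := S.em_facts h2
    have m1 : ∀ u ∈ posF s1, u ≤ a := by
      intro u hu
      simp only [posF, List.mem_toFinset, List.mem_append] at hu
      rcases hu with hu | hu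
      · exact (f1.pos1 u hu).1
      · exact (f1.pos2 u hu).1
    have m2 : ∀ u ∈ posF s2, u ≤ b := by
      intro u hu
      simp only [posF, List.mem_toFinset, List.mem_append] at hu
      rcases hu with hu | hu
      · exact (f2.pos1 u hu).1
      · exact (f2.pos2 u hu).1
    have n1 : a ∈ posF s1 := by simp [posF, f1.mem]
    have n2 : b ∈ posF s2 := by simp [posF, f2.mem]
    exact le_antisymm (m2 a (hab ▸ n1)) (m1 b (hab ▸ n2))
  · rintro γ ⟨hγ, hu⟩
    obtain ⟨z, s, hE, hl, rfl⟩ := (S.gamma_iff _ _).1 hγ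
    have f := S.em_facts hE
    have hz := hu z (by simp [posF, f.mem])
    have hS : Slot η St k z := Or.inr (by omega)
    have hz' : z ∈ {z | x < z ∧ z < y ∧ Slot η St k z ∧ ¬ tau k (St z)} :=
      ⟨hz.1, hz.2, hS, (S.tau_eq hS (h z hz.1 hz.2)).2.2 ⟨s, hE.2⟩⟩
    refine ⟨z, hz', ?_⟩
    have h2 := (hEm z hz').2.choose_spec
    have : (hEm z hz').2.choose = s := by
      have := h2.2.symm.trans hE.2
      simpa using this
    simp only [this]

end Sys

end SlotRec

namespace SlotRec

lemma exists_enum (S : Set ℤ) (hL : ∀ x, ∃ y ≤ x, y ∈ S) (hR : ∀ x, ∃ y ≥ x, y ∈ S)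
    {b : ℤ} (hb : b ∈ S) : ∃ f : ℤ → ℤ, StrictMono f ∧ f 0 = b ∧ Set.range f = S := by
  classical
  haveI : Nonempty S := ⟨⟨b, hb⟩⟩
  haveI : NoMaxOrder S := ⟨fun x => by
    obtain ⟨y, h1, h2⟩ := hR (x + 1)
    exact ⟨⟨y, h2⟩, Subtype.mk_lt_mk.2 (show (x : ℤ) < y by omega)⟩⟩
  haveI : NoMinOrder S := ⟨fun x => by
    obtain ⟨y, h1, h2⟩ := hL (x - 1)
    exact ⟨⟨y, h2⟩, Subtype.mk_lt_mk.2 (show y < (x : ℤ) by omega)⟩⟩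
  letI : LocallyFiniteOrder S := inferInstanceAs (LocallyFiniteOrder {x // x ∈ S})
  letI : SuccOrder S := LinearLocallyFiniteOrder.succOrder S
  letI : PredOrder S := LinearLocallyFiniteOrder.predOrder S
  let e : S ≃o ℤ := orderIsoIntOfLinearSuccPredArch
  refine ⟨fun i => (e.symm (i + e ⟨b, hb⟩) : S), ?_, ?_, ?_⟩
  · intro i j hij
    have : e.symm (i + e ⟨b, hb⟩) < e.symm (j + e ⟨b, hb⟩) :=
      e.symm.strictMono (by omega)
    exact this
  · simp
  · ext x
    constructor
    · rintro ⟨i, rfl⟩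
      exact Subtype.coe_prop _
    · intro hx
      refine ⟨e ⟨x, hx⟩ - e ⟨b, hb⟩, ?_⟩
      simp

lemma sub_enum {f g : ℤ → ℤ} (hf : StrictMono f) (hg : StrictMono g) (h0 : f 0 = g 0)
    (hs : Set.range f ⊆ Set.range g) :
    ∃ a : ℤ → ℤ, StrictMono a ∧ a 0 = 0 ∧ ∀ i, g (a i) = f i := by
  have : ∀ i, ∃ j, g j = f i := fun i => hs ⟨i, rfl⟩
  choose a ha using this
  refine ⟨a, ?_, ?_, ha⟩
  · intro i j hij
    have := hf hij
    rw [← ha, ← ha] at this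
    exact hg.lt_iff_lt.1 this
  · apply hg.injective
    rw [ha, h0]

lemma mono_ge {a : ℤ → ℤ} (ha : StrictMono a) (h0 : a 0 = 0) :
    (∀ i, 0 ≤ i → i ≤ a i) ∧ (∀ i, i ≤ 0 → a i ≤ i) := by
  constructor
  · intro i hi
    induction i, hi using Int.leInduction with
    | base => omega
    | succ n hn ih =>
      have := ha (show n < n + 1 by omega)
      omega
  · intro i hi
    induction i, hi using Int.leInductionDown with
    | base => omega
    | pred n hn ih =>
      have := ha (show n - 1 < n by omega)
      omega

structure Down (W1 W0 : ℤ → Bool) (M : ℤ → ℕ) (a : ℤ → ℤ) (c : ℤ → ℕ) : Prop where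
  mono : StrictMono a
  zero : a 0 = 0
  succ : ∀ i, a (i + 1) = a i + 1 + c i
  half : ∀ i, c i / 2 = M i
  letter : ∀ i, ∀ t : ℕ, t ≤ c i → W0 (a i + t) = xor (W1 i) (decide (t % 2 = 1))
  next : ∀ i, W1 (i + 1) = xor (W1 i) (decide (c i % 2 = 1))

lemma down_step {W1 W0 W1' W0' : ℤ → Bool} {M : ℤ → ℕ} {a a' : ℤ → ℤ} {c c' : ℤ → ℕ}
    (D : Down W1 W0 M a c) (D' : Down W1' W0' M a' c') {n : ℤ}
    (h : ∀ i, -n ≤ i → i ≤ n → W1 i = W1' i) : ∀ i, -n ≤ i → i ≤ n → W0 i = W0' i := by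
  have hc : ∀ i, -n ≤ i → i + 1 ≤ n → c i = c' i := by
    intro i h1 h2
    have e1 := D.half i
    have e2 := D'.half i
    have e3 := D.next i
    have e4 := D'.next i
    rw [h i h1 (by omega), h (i + 1) (by omega) h2, e4] at e3
    have e5 : decide (c' i % 2 = 1) = decide (c i % 2 = 1) := by
      revert e3; cases W1' i <;> simp
    rw [decide_eq_decide] at e5
    omega
  have ha1 : ∀ i, 0 ≤ i → i ≤ n → a i = a' i := by
    intro i hi
    induction i, hi using Int.leInduction with
    | base => intro _; rw [D.zero, D'.zero]
    | succ m hm ih =>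
      intro h1
      rw [D.succ, D'.succ, ih (by omega), hc m (by omega) h1]
  have ha2 : ∀ i, i ≤ 0 → -n ≤ i → a i = a' i := by
    intro i hi
    induction i, hi using Int.leInductionDown with
    | base => intro _; rw [D.zero, D'.zero]
    | pred m hm ih =>
      intro h1
      have e1 := D.succ (m - 1)
      have e2 := D'.succ (m - 1)
      have e3 := ih (by omega)
      have e4 := hc (m - 1) h1 (by omega)
      simp only [sub_add_cancel] at e1 e2
      omega
  have ha : ∀ i, -n ≤ i → i ≤ n → a i = a' i := by
    intro i h1 h2
    rcases le_total 0 i with h | h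
    · exact ha1 i h h2
    · exact ha2 i h h1
  have hge := mono_ge D.mono D.zero
  intro j h1 h2
  have hn : 0 ≤ n := by omega
  obtain ⟨i, hi, hmax⟩ := Int.exists_greatest_of_bdd (P := fun i => a i ≤ j)
    ⟨max j 0, fun i hi => by
      by_contra hcon
      have := hge.1 i (by omega)
      omega⟩ ⟨-n, by have := hge.2 (-n) (by omega); omega⟩
  have hi1 : -n ≤ i := hmax _ (by have := hge.2 (-n) (by omega); omega)
  have hi2 : i ≤ n := by
    by_contra hcon
    have := hge.1 i (by omega)
    omega
  have hlt : j < a (i + 1) := by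
    by_contra hcon
    have := hmax (i + 1) (by omega)
    omega
  obtain ⟨t, ht⟩ : ∃ t : ℕ, j = a i + t := ⟨(j - a i).toNat, by omega⟩
  have hs := D.succ i
  have htc : t ≤ c i := by omega
  have htc' : t ≤ c' i := by
    by_cases hin : i = n
    · have := hge.1 i (by omega)
      omega
    · rw [← hc i hi1 (by omega)]; exact htc
  have l1 := D.letter i t htc
  have l2 := D'.letter i t htc'
  rw [← ha i hi1 hi2] at l2
  rw [ht, l1, l2, h i hi1 hi2]

namespace Sys

variable {η : Cfg} {ξ : ℤ → ℤ} {St : ℤ → Stk}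

lemma enum_spec (S : Sys η ξ St) (hr0 : isRecord η 0) (hp : recPos ξ 0 = 0) (k : ℕ) :
    StrictMono (skEnum η ξ k) ∧ skEnum η ξ k 0 = 0 ∧
      ∀ x, (∃ i, skEnum η ξ k i = x) ↔ Slot η St k x := by
  have hex : ∃ f : ℤ → ℤ, StrictMono f ∧ f 0 = recPos ξ 0 ∧
      Set.range f = {x : ℤ | IsKSlot η k x} := by
    apply exists_enum
    · intro x
      obtain ⟨y, h1, h2⟩ := S.recL x
      exact ⟨y, h1, Or.inl h2⟩
    · intro x
      obtain ⟨y, h1, h2⟩ := S.recR x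
      exact ⟨y, h1, Or.inl h2⟩
    · rw [hp]; exact Or.inl hr0
  have he : skEnum η ξ k = hex.choose := by
    unfold skEnum enumZ
    rw [dif_pos hex]
  obtain ⟨h1, h2, h3⟩ := hex.choose_spec
  rw [he]
  refine ⟨h1, by rw [h2, hp], fun x => ?_⟩
  rw [← S.isKSlot_iff]
  have : x ∈ Set.range hex.choose ↔ x ∈ {x : ℤ | IsKSlot η k x} := by rw [h3]
  exact this

lemma down (S : Sys η ξ St) (hr0 : isRecord η 0) (hp : recPos ξ 0 = 0) (k : ℕ) :
    ∃ a c, Down (fun i => η (skEnum η ξ (k + 1) i)) (fun i => η (skEnum η ξ k i))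
      (Mk η ξ (k + 1)) a c := by
  obtain ⟨f1, f2, f3⟩ := S.enum_spec hr0 hp (k + 1)
  obtain ⟨g1, g2, g3⟩ := S.enum_spec hr0 hp k
  have hMk : ∀ i, Mk η ξ (k + 1) i = {γ | γ ∈ Gamma η (k + 1) ∧
    ∀ x ∈ γ, skEnum η ξ (k + 1) i < x ∧ x < skEnum η ξ (k + 1) (i + 1)}.ncard := fun i => rfl
  generalize Mk η ξ (k + 1) = M at *
  generalize skEnum η ξ (k + 1) = f at *
  generalize skEnum η ξ k = g at *
  obtain ⟨a, a1, a2, a3⟩ := sub_enum f1 g1 (f2.trans g2.symm) (by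
    rintro _ ⟨i, rfl⟩
    refine (g3 _).2 ?_
    rcases (f3 (f i)).1 ⟨i, rfl⟩ with h | h
    · exact Or.inl h
    · exact Or.inr (by omega))
  have hsl : ∀ j, Slot η St k (g j) := fun j => (g3 _).1 ⟨j, rfl⟩
  have hsl1 : ∀ i, Slot η St (k + 1) (f i) := fun j => (f3 _).1 ⟨j, rfl⟩
  have hgap : ∀ j z, g j < z → z < g (j + 1) → ¬ Slot η St k z := by
    intro j z h1 h2 h3
    obtain ⟨i, rfl⟩ := (g3 z).2 h3
    have := g1.lt_iff_lt.1 h1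
    have := g1.lt_iff_lt.1 h2
    omega
  have hgap1 : ∀ j z, f j < z → z < f (j + 1) → ¬ Slot η St (k + 1) z := by
    intro j z h1 h2 h3
    obtain ⟨i, rfl⟩ := (f3 z).2 h3
    have := f1.lt_iff_lt.1 h1
    have := f1.lt_iff_lt.1 h2
    omega
  have hc : ∀ i, a (i + 1) = a i + 1 + ((a (i + 1) - a i - 1).toNat : ℤ) := by
    intro i
    have := a1 (show i < i + 1 by omega)
    omega
  have hlet : ∀ j, η (g (j + 1)) = η (g j) ↔ Slot η St (k + 1) (g (j + 1)) := fun j =>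
    S.letter_iff (g1 (by omega)) (hsl _) (hsl _) (hgap j)
  have htau : ∀ j, ¬ Slot η St (k + 1) (g (j + 1)) →
      (tau k (St (g (j + 1))) ↔ ¬ tau k (St (g j))) := fun j h =>
    S.tau_alt (g1 (by omega)) (hsl _) (hgap j) h
  generalize hcdef : (fun i => (a (i + 1) - a i - 1).toNat) = c at *
  have hc : ∀ i, a (i + 1) = a i + 1 + c i := by
    intro i; rw [← hcdef]; exact hc i
  have hns : ∀ i, ∀ t : ℕ, t + 1 ≤ c i → ¬ Slot η St (k + 1) (g (a i + t + 1)) := by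
    intro i t ht
    have := hc i
    apply hgap1 i
    · rw [← a3]; exact g1 (by omega)
    · rw [← a3]; exact g1 (by omega)
  have hL : ∀ i, ∀ t : ℕ, t ≤ c i → η (g (a i + t)) = xor (η (f i)) (decide (t % 2 = 1)) ∧
      (tau k (St (g (a i + t))) ↔ t % 2 = 1) := by
    intro i t
    induction t with
    | zero =>
      intro _
      simp only [Nat.cast_zero, add_zero, a3]
      simp [S.tau_slot (hsl1 i)]
    | succ t ih =>
      intro ht
      obtain ⟨i1, i2⟩ := ih (by omega)
      have h1 := hns i t ht
      have e : a i + ((t + 1 : ℕ) : ℤ) = a i + t + 1 := by push_cast; ring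
      rw [e]
      constructor
      · have h2 := (hlet (a i + t)).not.2 h1
        rw [i1] at h2
        have h3 : decide ((t + 1) % 2 = 1) = !decide (t % 2 = 1) := by
          rw [← decide_not, decide_eq_decide]; omega
        rw [h3]
        revert h2
        cases η (g (a i + t + 1)) <;> cases η (f i) <;> cases decide (t % 2 = 1) <;> simp
      · rw [htau _ h1, i2]; omega
  refine ⟨a, c, a1, a2, hc, ?_, fun i t ht => (hL i t ht).1, ?_⟩
  · intro i
    rw [hMk, S.count_gap (hgap1 i) (hsl1 i)]
    have : {z | f i < z ∧ z < f (i + 1) ∧ Slot η St k z ∧ ¬ tau k (St z)} =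
        (fun s : ℕ => g (a i + ((2 * s : ℕ) : ℤ))) '' (Finset.Icc 1 (c i / 2) : Finset ℕ) := by
      ext z
      simp only [Set.mem_setOf_eq, Set.mem_image, Finset.coe_Icc, Set.mem_Icc]
      constructor
      · rintro ⟨h1, h2, h3, h4⟩
        obtain ⟨j, rfl⟩ := (g3 z).2 h3
        rw [← a3, g1.lt_iff_lt] at h1 h2
        have := hc i
        obtain ⟨t, ht⟩ : ∃ t : ℕ, j = a i + t := ⟨(j - a i).toNat, by omega⟩
        subst ht
        have h5 := (hL i t (by omega)).2
        rw [h5] at h4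
        refine ⟨t / 2, by omega, ?_⟩
        congr 2
        omega
      · rintro ⟨s, hs, rfl⟩
        have := hc i
        refine ⟨?_, ?_, hsl _, ?_⟩
        · rw [← a3]; exact g1 (by omega)
        · rw [← a3]; exact g1 (by omega)
        · rw [(hL i (2 * s) (by omega)).2]; omega
    rw [this, Set.ncard_image_of_injective, Set.ncard_coe_finset]
    · simp
    · intro s t hst
      have := g1.injective hst
      omega
  · intro i
    have e1 := (hL i (c i) le_rfl).1
    have e2 := (hlet (a i + c i)).2 (by
      have := hc i
      rw [show a i + (c i : ℤ) + 1 = a (i + 1) by omega, a3]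
      exact hsl1 _)
    rw [show a i + (c i : ℤ) + 1 = a (i + 1) by have := hc i; omega, a3] at e2
    rw [e2, e1]

lemma large (S : Sys η ξ St) (hr0 : isRecord η 0) (hp : recPos ξ 0 = 0) (n : ℤ) :
    ∃ K : ℕ, ∀ k ≥ K, ∀ i, -n ≤ i → i ≤ n → η (skEnum η ξ k i) = false := by
  obtain ⟨ρ, r1, r2, r3⟩ := exists_enum {x | isRecord η x} S.recL S.recR hr0
  obtain ⟨K, hK⟩ : ∃ K : ℕ, ∀ x ∈ Finset.Icc (ρ (-n)) (ρ n), lvl η St x < K := by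
    refine ⟨(Finset.Icc (ρ (-n)) (ρ n)).sup (lvl η St) + 1, fun x hx => ?_⟩
    have := Finset.le_sup (f := lvl η St) hx
    omega
  refine ⟨K, fun k hk i h1 h2 => ?_⟩
  obtain ⟨f1, f2, f3⟩ := S.enum_spec hr0 hp k
  generalize skEnum η ξ k = f at *
  obtain ⟨b, b1, b2, b3⟩ := sub_enum r1 f1 (r2.trans f2.symm) (by
    rw [r3]
    intro x hx
    exact (f3 x).2 (Or.inl hx))
  have hb := mono_ge b1 b2
  have hm : f i ∈ Finset.Icc (ρ (-n)) (ρ n) := by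
    rw [Finset.mem_Icc, ← b3, ← b3, f1.le_iff_le, f1.le_iff_le]
    have := hb.1 n (by omega)
    have := hb.2 (-n) (by omega)
    omega
  rcases (f3 (f i)).1 ⟨i, rfl⟩ with h | h
  · exact S.rec_false h
  · have := hK _ hm
    omega

lemma enum_zero (S : Sys η ξ St) (hr0 : isRecord η 0) (hp : recPos ξ 0 = 0) (i : ℤ) :
    skEnum η ξ 0 i = i := by
  obtain ⟨f1, f2, f3⟩ := S.enum_spec hr0 hp 0
  obtain ⟨b, b1, b2, b3⟩ := sub_enum (f := id) strictMono_id f1 (by simp [f2]) (by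
    intro x hx
    exact (f3 x).2 (Or.inr (by omega)))
  have hb := mono_ge b1 b2
  have hf := mono_ge f1 f2
  have h := b3 i
  simp only [id] at h
  rcases le_total 0 i with h0 | h0
  · have := hf.1 (b i) (by have := hb.1 i h0; omega)
    have := hb.1 i h0
    have e : b i = i := by omega
    rwa [e] at h
  · have := hf.2 (b i) (by have := hb.2 i h0; omega)
    have := hb.2 i h0
    have e : b i = i := by omega
    rwa [e] at h

end Sys

lemma sgn_val (b : Bool) : 2 * valZ b - 1 = sgn b := by cases b <;> simp [valZ, sgn]

lemma sum_lift {η : Cfg} {ξ : ℤ → ℤ} (h : IsLift η ξ) {z x : ℤ} (hzx : z ≤ x) :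
    ∑ y ∈ Finset.Icc z x, valZ (η y) - ∑ y ∈ Finset.Icc z x, (1 - valZ (η y)) =
      ξ x - ξ (z - 1) := by
  induction x, hzx using Int.leInduction with
  | base => simp; have := h z; omega
  | succ n hn ih =>
    have : Finset.Icc z (n + 1) = insert (n + 1) (Finset.Icc z n) := by
      ext y; simp only [Finset.mem_Icc, Finset.mem_insert]; omega
    rw [this, Finset.sum_insert (by simp), Finset.sum_insert (by simp)]
    have := h (n + 1)
    simp only [add_sub_cancel_right] at this
    omega

lemma sum_liftR {η : Cfg} {ξ : ℤ → ℤ} (h : IsLift η ξ) {z x : ℤ} (hzx : z ≤ x) :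
    2 * ∑ y ∈ Finset.Icc z x, valR (η y) - (x - z + 1 : ℝ) =
      (ξ x : ℝ) - ξ (z - 1) := by
  have hv : ∀ b, ((valZ b : ℤ) : ℝ) = valR b := by intro b; cases b <;> simp [valZ, valR]
  have h1 := sum_lift h hzx
  have h2 := congrArg (Int.cast : ℤ → ℝ) h1
  push_cast at h2
  simp only [hv] at h2
  rw [← h2, Finset.sum_sub_distrib]
  simp only [Finset.sum_const, Int.card_Icc, nsmul_eq_mul, mul_one]
  have : (((x + 1 - z).toNat : ℕ) : ℝ) = x - z + 1 := by
    have e : (((x + 1 - z).toNat : ℕ) : ℤ) = x + 1 - z := by omega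
    have e' := congrArg (Int.cast : ℤ → ℝ) e
    push_cast at e'
    rw [e']; ring
  rw [this]; ring

lemma ev_bound {s : ℕ → ℝ} {lam : ℝ} (hl : lam < 1 / 2)
    (h : Tendsto (fun y : ℕ => s y / (y : ℝ)) atTop (nhds lam)) (C : ℝ) :
    ∃ N : ℕ, ∀ y ≥ N, 2 * s y - y < C := by
  have h1 : ∀ᶠ y : ℕ in atTop, s y / (y : ℝ) < (lam + 1 / 2) / 2 :=
    h.eventually_lt_const (by linarith)
  have h2 : Tendsto (fun y : ℕ => (1 / 2 - lam) * (y : ℝ)) atTop atTop :=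
    Tendsto.const_mul_atTop (by linarith) tendsto_natCast_atTop_atTop
  have h3 := h2.eventually_gt_atTop (-C)
  obtain ⟨N, hN⟩ := eventually_atTop.1 ((h1.and h3).and (eventually_gt_atTop 0))
  refine ⟨N, fun y hy => ?_⟩
  obtain ⟨⟨a1, a2⟩, a3⟩ := hN y hy
  have a3' : (0 : ℝ) < y := by exact_mod_cast a3
  rw [div_lt_iff₀ a3'] at a1
  nlinarith

lemma exists_sys {η : Cfg} {ξ : ℤ → ℤ} (hη : inX η) (hl : IsLift η ξ)
    (hb : ∀ x : ℤ, BddBelow (ξ '' Set.Iic x)) (h0 : ξ 0 = 0 ∧ ∀ x < 0, ξ x ≠ 0) :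
    ∃ St, Sys η ξ St ∧ isRecord η 0 ∧ recPos ξ 0 = 0 := by
  classical
  have hlift : ∀ x, ξ x = ξ (x - 1) + sgn (η x) := by
    intro x
    have := hl x
    rw [sgn_val] at this
    omega
  have hrec : ∀ x, isRecord η x ↔ ∀ z < x, ξ x < ξ z := by
    intro x
    constructor
    · intro h z hz
      have h1 := h (z + 1) (by omega)
      have h2 := sum_lift hl (show z + 1 ≤ x by omega)
      simp only [add_sub_cancel_right] at h2
      omega
    · intro h z hz
      have h1 := h (z - 1) (by omega)
      have h2 := sum_lift hl hz
      omega
  obtain ⟨lam, -, hlam, hL, hR⟩ := hη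
  have left : ∀ C : ℤ, ∃ N : ℤ, ∀ x ≤ N, C < ξ x := by
    intro C
    obtain ⟨N, hN⟩ := ev_bound hlam hL (-(C : ℝ))
    refine ⟨-(N : ℤ) - 1, fun x hx => ?_⟩
    obtain ⟨y, rfl⟩ : ∃ y : ℕ, x = -(y : ℤ) - 1 := ⟨(-x - 1).toNat, by omega⟩
    have h1 := hN y (by omega)
    have h2 := sum_liftR hl (show -(y : ℤ) ≤ 0 by omega)
    rw [h0.1] at h2
    push_cast at h2
    have : (C : ℝ) < ξ (-(y : ℤ) - 1) := by linarith
    exact_mod_cast this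
  have right : ∀ C : ℤ, ∃ x, ξ x < C := by
    intro C
    obtain ⟨N, hN⟩ := ev_bound hlam hR ((C : ℝ) - ξ (-1))
    refine ⟨N, ?_⟩
    have h1 := hN N le_rfl
    have h2 := sum_liftR hl (show 0 ≤ (N : ℤ) by omega)
    simp only [zero_sub] at h2
    push_cast at h2
    have : (ξ N : ℝ) < C := by linarith
    exact_mod_cast this
  have least : ∀ C : ℤ, ∃ y, ξ y ≤ C ∧ ∀ z < y, C < ξ z := by
    intro C
    obtain ⟨N, hN⟩ := left C
    obtain ⟨x, hx⟩ := right C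
    obtain ⟨y, hy, hmin⟩ := Int.exists_least_of_bdd (P := fun y => ξ y ≤ C)
      ⟨N, fun z hz => by
        by_contra hc
        have := hN z (by omega)
        omega⟩ ⟨x, hx.le⟩
    refine ⟨y, hy, fun z hz => ?_⟩
    by_contra hc
    have := hmin z (by omega)
    omega
  have recL : ∀ x, ∃ y ≤ x, isRecord η y := by
    intro x
    obtain ⟨y, h1, h2⟩ := least (ξ x)
    refine ⟨y, ?_, (hrec y).2 fun z hz => by have := h2 z hz; omega⟩
    by_contra hc
    exact absurd (h2 x (by omega)) (lt_irrefl _)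
  have recR : ∀ x, ∃ y ≥ x, isRecord η y := by
    intro x
    obtain ⟨C, hC⟩ := hb x
    obtain ⟨y, h1, h2⟩ := least (C - 1)
    refine ⟨y, ?_, (hrec y).2 fun z hz => by have := h2 z hz; omega⟩
    by_contra hc
    have := hC ⟨y, Set.mem_Iic.2 (by omega), rfl⟩
    omega
  have rec0 : isRecord η 0 := by
    obtain ⟨y, h1, h2⟩ := least 0
    have hy : y ≤ 0 := by
      by_contra hc
      have := h2 0 (by omega)
      omega
    rcases eq_or_lt_of_le hy with rfl | hy
    · exact (hrec 0).2 fun z hz => by have := h2 z hz; omega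
    · exfalso
      apply h0.2 y hy
      have e1 := h2 (y - 1) (by omega)
      have e2 := hlift y
      have e3 : sgn (η y) = 1 ∨ sgn (η y) = -1 := by cases η y <;> simp [sgn]
      omega
  have hp : recPos ξ 0 = 0 := by
    unfold recPos
    have hl : IsLeast {x : ℤ | ξ x = -0} 0 := by
      refine ⟨by simp [h0.1], fun x hx => ?_⟩
      by_contra hc
      exact h0.2 x (by omega) (by simpa using hx)
    exact hl.csInf_eq
  have last : ∀ x, ∃ y ≤ x, isRecord η y ∧ ∀ z, y < z → z ≤ x → ¬ isRecord η z := by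
    intro x
    obtain ⟨y0, h0, hr0⟩ := recL x
    obtain ⟨y, ⟨hy1, hy2⟩, hmax⟩ := Int.exists_greatest_of_bdd
      (P := fun y => y ≤ x ∧ isRecord η y) ⟨x, fun z hz => hz.1⟩ ⟨y0, h0, hr0⟩
    refine ⟨y, hy1, hy2, fun z h1 h2 hz => ?_⟩
    have := hmax z ⟨h2, hz⟩
    omega
  choose lr l1 l2 l3 using last
  refine ⟨fun x => (word η (lr x) (x - lr x).toNat).foldl step [],
    ⟨hlift, hrec, recL, recR, ?_, ?_⟩, rec0, hp⟩
  · intro x hx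
    have : lr x = x := by
      have := l1 x
      by_contra hc
      exact l3 x x (by omega) le_rfl hx
    simp [this, word]
  · intro x hx
    have e0 : lr x ≠ x := fun h => hx (h ▸ l2 x)
    have e1 := l1 x
    have e2 := l1 (x - 1)
    have e3 : lr (x - 1) = lr x := by
      rcases lt_trichotomy (lr (x - 1)) (lr x) with h | h | h
      · exact absurd (l2 x) (l3 (x - 1) _ h (by omega))
      · exact h
      · exact absurd (l2 (x - 1)) (l3 x _ h (by omega))
    simp only [e3]
    have e4 : (x - lr x).toNat = (x - 1 - lr x).toNat + 1 := by omega
    have e5 : lr x + 1 + (((x - 1 - lr x).toNat : ℕ) : ℤ) = x := by omega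
    rw [e4, word_succ, List.foldl_append, e5]
    rfl

end SlotRec

/-- **reconstruction.** Let `𝒲̂` be the set of walk lifts `ξ` of
configurations `η ∈ 𝒳` (with finite running minimum) normalized so that
`min{x : ξ(x) = 0} = 0` (Record `0` at the origin).  If two such walks have the
same `k`-component for every `k ≥ 1`, then they are equal: the slot
decomposition `ξ ↦ (M_k ξ)_{k≥1}` is injective on `𝒲̂`, and a configuration can
be reconstructed from its components. -/
theorem component_reconstruction (η η' : Cfg) (ξ ξ' : ℤ → ℤ)
    (hη : inX η) (hη' : inX η') (hlift : IsLift η ξ) (hlift' : IsLift η' ξ')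
    (hbdd : ∀ x : ℤ, BddBelow (ξ '' Set.Iic x))
    (hbdd' : ∀ x : ℤ, BddBelow (ξ' '' Set.Iic x))
    (h0 : ξ 0 = 0 ∧ ∀ x < 0, ξ x ≠ 0) (h0' : ξ' 0 = 0 ∧ ∀ x < 0, ξ' x ≠ 0)
    (hM : ∀ k : ℕ, 1 ≤ k → ∀ i : ℤ, Mk η ξ k i = Mk η' ξ' k i) :
    ξ = ξ' := by
  obtain ⟨St, S, hr, hp⟩ := SlotRec.exists_sys hη hlift hbdd h0
  obtain ⟨St', S', hr', hp'⟩ := SlotRec.exists_sys hη' hlift' hbdd' h0'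
  have hW : ∀ n : ℤ, ∀ i, -n ≤ i → i ≤ n → η i = η' i := by
    intro n
    obtain ⟨K, hK⟩ := S.large hr hp n
    obtain ⟨K', hK'⟩ := S'.large hr' hp' n
    have key : ∀ d k : ℕ, k + d = max K K' → ∀ i, -n ≤ i → i ≤ n →
        η (skEnum η ξ k i) = η' (skEnum η' ξ' k i) := by
      intro d
      induction d with
      | zero =>
        intro k hk i h1 h2
        rw [hK k (by omega) i h1 h2, hK' k (by omega) i h1 h2]
      | succ d ih =>
        intro k hk
        obtain ⟨a, c, D⟩ := S.down hr hp k
        obtain ⟨a', c', D'⟩ := S'.down hr' hp' k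
        have hMM : Mk η ξ (k + 1) = Mk η' ξ' (k + 1) := funext (hM (k + 1) (by omega))
        rw [← hMM] at D'
        exact SlotRec.down_step D D' (ih (k + 1) (by omega))
    intro i h1 h2
    have := key (max K K') 0 (by omega) i h1 h2
    rwa [S.enum_zero hr hp, S'.enum_zero hr' hp'] at this
  have hη_eq : ∀ i, η i = η' i := fun i => hW |i| i (neg_abs_le i) (le_abs_self i)
  have hstep : ∀ x, ξ x - ξ (x - 1) = ξ' x - ξ' (x - 1) := by
    intro x
    rw [hlift x, hlift' x, hη_eq x]
  funext x
  rcases le_total 0 x with hx | hx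
  · induction x, hx using Int.leInduction with
    | base => rw [h0.1, h0'.1]
    | succ m hm ih =>
      have := hstep (m + 1)
      simp only [add_sub_cancel_right] at this
      omega
  · induction x, hx using Int.leInductionDown with
    | base => rw [h0.1, h0'.1]
    | pred m hm ih =>
      have := hstep m
      omega
end

section
/- Let μ̂ be a probability measure on X̂ that is invariant under the record-shift θ̂ and satisfies μ̂(r) < ∞. Then the inverse-Palm measure μ := Palm(μ̂) is θ-invariant, supported on X, and satisfies Palm(μ̂) ∘ T^{-1} = Palm(μ̂ ∘ T̂^{-1}). -/
open MeasureTheory Filter Finset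

/-- The shift `θ` on configurations: `θη(y) = η(y+1)`. -/
def shiftC (η : Cfg) : Cfg := fun y => η (y + 1)

/-- The shift by `n`: `θ^n η (y) = η (y + n)`. -/
def shiftBy (n : ℤ) (η : Cfg) : Cfg := fun y => η (y + n)

/-- The shift on `ℕ^ℤ` (soliton components). -/
def shiftN (z : ℤ → ℕ) : ℤ → ℕ := fun i => z (i + 1)

/-- `r(η)`: the position of the first record of `η` in `[1,∞)`. -/
noncomputable def rFirst (η : Cfg) : ℤ := sInf {x : ℤ | 1 ≤ x ∧ isRecord η x}

/-- The record-shift `θ̂ η = θ^{r(η)} η`. -/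
noncomputable def thetaHat (η : Cfg) : Cfg := shiftBy (rFirst η) η

/-- The dynamics seen from a record, `T̂ η = θ^{ψ_η(0)} (Tη)` where `ψ_η(0)` is
the position of Record `0` of `Tξ` for the canonical lift `ξ = ξ°[η]`. -/
noncomputable def That (η : Cfg) : Cfg := shiftBy (recPos (liftT (xi0 η)) 0) (bbsT η)

/-- The set `𝒳` of configurations with density in `(0,1/2)`. -/
def Xset : Set Cfg := {η | inX η}

/-- The set `𝒳̂` of configurations in `𝒳` having a record at the origin. -/
def XhatSet : Set Cfg := {η | inX η ∧ isRecord η 0}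

/-- The `k`-component of a configuration (seen from its canonical lift `ξ°[η]`,
which for `η ∈ 𝒳̂` has Record `0` at the origin). -/
noncomputable def MkHat (η : Cfg) (k : ℕ) (i : ℤ) : ℕ := Mk η (xi0 η) k i

/-- `μ` is the inverse-Palm measure of `μ̂`:
`μ(A) = μ̂(r)⁻¹ · ∫ Σ_{i=1}^{r(η)} 1_A(θ^i η) dμ̂`. -/
def PalmIdentity (muhat mu : MeasureTheory.Measure Cfg) : Prop :=
  ∀ A : Set Cfg, MeasurableSet A →
    mu A = (∫⁻ η, ((rFirst η).toNat : ENNReal) ∂muhat)⁻¹ *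
      ∫⁻ η, ∑ i ∈ Finset.Icc (1 : ℤ) (rFirst η),
        A.indicator (fun _ => (1 : ENNReal)) (shiftBy i η) ∂muhat

/-- The number of `k`-solitons in the excursion of `η` between Records 0 and 1
(i.e. contained in `(0, r(η))`), for `η` with a record at the origin. -/
noncomputable def excCount (η : Cfg) (k : ℕ) : ℕ :=
  Set.ncard {γ | γ ∈ Gamma η k ∧ ∀ x ∈ γ, 0 < x ∧ x < rFirst η}

/-- `ρ_k`: the mean number of `k`-solitons per excursion, under
`μ̂ = μ( · | 0 ∈ Rη)`. -/
noncomputable def rhoK (mu : MeasureTheory.Measure Cfg) (k : ℕ) : ℝ :=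
  ∫ η, (excCount η k : ℝ) ∂(ProbabilityTheory.cond mu XhatSet)

/-- `w_0 = 1 + Σ_k 2k ρ_k`: the mean excursion length. -/
noncomputable def w0of (mu : MeasureTheory.Measure Cfg) : ℝ :=
  1 + ∑' k : ℕ, 2 * (k : ℝ) * rhoK mu k

/-- `ρ̄_k = ρ_k / w_0`: the mean number of `k`-solitons per site. -/
noncomputable def rhoBar (mu : MeasureTheory.Measure Cfg) (k : ℕ) : ℝ :=
  rhoK mu k / w0of mu

/-- The leftmost site of a soliton. -/
noncomputable def leftmost (γ : Finset ℤ) : ℤ := sInf (γ : Set ℤ)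


/-! ## Walk lemmas -/

lemma bdd_tend {u v : ℕ → ℝ} {C l : ℝ} (h : ∀ y, |v y - u y| ≤ C)
    (hu : Tendsto (fun y : ℕ => u y / (y : ℝ)) atTop (nhds l)) :
    Tendsto (fun y : ℕ => v y / (y : ℝ)) atTop (nhds l) := by
  have h1 : Tendsto (fun y : ℕ => (v y - u y) / (y:ℝ)) atTop (nhds 0) := by
    apply squeeze_zero_norm (a := fun y : ℕ => C / (y : ℝ))
    · intro y
      rw [norm_div, Real.norm_eq_abs, Real.norm_natCast]
      gcongr
      exact h y
    · exact tendsto_const_div_atTop_nhds_zero_nat C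
  have := h1.add hu
  simp only [zero_add] at this
  refine this.congr fun y => by ring

lemma valZ_cases (b : Bool) : valZ b = 0 ∨ valZ b = 1 := by
  cases b <;> simp [valZ]

lemma valZ_cast (b : Bool) : ((valZ b : ℤ) : ℝ) = valR b := by
  cases b <;> simp [valZ, valR]

lemma lift_xi0 (η : Cfg) : IsLift η (xi0 η) := by
  intro x
  by_cases hx : 1 ≤ x
  · have h0 : (0:ℤ) ≤ x := by omega
    have h1 : (0:ℤ) ≤ x - 1 := by omega
    simp only [xi0, h0, h1, if_true]
    have : Finset.Icc 1 x = insert x (Finset.Icc 1 (x-1)) := by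
      ext y; simp only [Finset.mem_Icc, Finset.mem_insert]; omega
    rw [this, Finset.sum_insert (by simp)]
    ring
  · have key : ∀ z : ℤ, z ≤ 0 → xi0 η z = -∑ y ∈ Finset.Icc (z + 1) 0, (2 * valZ (η y) - 1) := by
      intro z hz
      by_cases h : z = 0
      · subst h; simp [xi0]
      · have : ¬ (0 ≤ z) := by omega
        simp only [xi0, this, if_false]
    rw [key x (by omega), key (x-1) (by omega)]
    have : Finset.Icc (x - 1 + 1) 0 = insert x (Finset.Icc (x + 1) 0) := by
      ext y; simp only [Finset.mem_Icc, Finset.mem_insert]; omega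
    rw [this, Finset.sum_insert (by simp)]
    ring

lemma xi0_zero (η : Cfg) : xi0 η 0 = 0 := by simp [xi0]

lemma lift_sum {η : Cfg} {ξ : ℤ → ℤ} (h : IsLift η ξ) (z x : ℤ) (hzx : z - 1 ≤ x) :
    ∑ y ∈ Finset.Icc z x, (2 * valZ (η y) - 1) = ξ x - ξ (z - 1) := by
  induction x, hzx using Int.leInduction with
  | base => simp
  | succ n hn ih =>
    have : Finset.Icc z (n+1) = insert (n+1) (Finset.Icc z n) := by
      ext y; simp only [Finset.mem_Icc, Finset.mem_insert]; omega
    rw [this, Finset.sum_insert (by simp), ih]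
    have := h (n+1)
    simp only [add_sub_cancel_right] at this
    linarith

lemma record_iff {η : Cfg} {ξ : ℤ → ℤ} (h : IsLift η ξ) (x : ℤ) :
    isRecord η x ↔ ∀ z < x, ξ x < ξ z := by
  have key : ∀ z ≤ x, ((∑ y ∈ Finset.Icc z x, valZ (η y)) <
      ∑ y ∈ Finset.Icc z x, (1 - valZ (η y))) ↔ ξ x < ξ (z - 1) := by
    intro z hz
    have := lift_sum h z x (by omega)
    have h2 : ∑ y ∈ Finset.Icc z x, (2 * valZ (η y) - 1) =
      ∑ y ∈ Finset.Icc z x, valZ (η y) - ∑ y ∈ Finset.Icc z x, (1 - valZ (η y)) := by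
      rw [← Finset.sum_sub_distrib]
      exact Finset.sum_congr rfl fun _ _ => by ring
    constructor <;> intro <;> linarith
  constructor
  · intro H z hz
    have := (key (z+1) (by omega)).1 (H (z+1) (by omega))
    simpa using this
  · intro H z hz
    exact (key z hz).2 (H _ (by omega))

lemma lift_shift {η : Cfg} {ξ : ℤ → ℤ} (h : IsLift η ξ) (n c : ℤ) :
    IsLift (shiftBy n η) (fun x => ξ (x + n) + c) := by
  intro x
  have := h (x + n)
  simp only [shiftBy]
  rw [show x - 1 + n = x + n - 1 by ring]
  linarith

lemma record_shift (η : Cfg) (n x : ℤ) : isRecord (shiftBy n η) x ↔ isRecord η (x + n) := by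
  rw [record_iff (lift_shift (lift_xi0 η) n 0), record_iff (lift_xi0 η)]
  constructor
  · intro H z hz
    have := H (z - n) (by omega)
    simpa using this
  · intro H z hz
    have := H (z + n) (by omega)
    simpa using this

lemma bbsT_shift (η : Cfg) (n : ℤ) : bbsT (shiftBy n η) = shiftBy n (bbsT η) := by
  funext x
  have h := record_shift η n x
  by_cases hr : isRecord η (x + n)
  · simp [bbsT, h.2 hr, hr, shiftBy]
  · have h2 : ¬ isRecord (shiftBy n η) x := fun h' => hr (h.1 h')
    simp only [bbsT, hr, h2, if_false]
    simp [shiftBy, bbsT, hr]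

lemma shiftBy_shiftBy (η : Cfg) (n m : ℤ) : shiftBy n (shiftBy m η) = shiftBy (n + m) η := by
  funext x
  simp only [shiftBy]; congr 1; ring

lemma lift_uniq {η : Cfg} {ξ ξ' : ℤ → ℤ} (h : IsLift η ξ) (h' : IsLift η ξ') (h0 : ξ 0 = ξ' 0) :
    ξ = ξ' := by
  funext x
  induction x using Int.induction_on with
  | zero => exact h0
  | succ i ih =>
    have a := h (i+1); have b := h' (i+1)
    simp only [add_sub_cancel_right] at a b
    linarith
  | pred i ih =>
    have a := h (-i); have b := h' (-i)
    linarith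

lemma xi0_shift (η : Cfg) (n x : ℤ) : xi0 (shiftBy n η) x = xi0 η (x + n) - xi0 η n := by
  have := lift_uniq (lift_xi0 (shiftBy n η)) (lift_shift (lift_xi0 η) n (- xi0 η n))
    (by simp [xi0_zero])
  rw [this]; ring

lemma lift_step {η : Cfg} {ξ : ℤ → ℤ} (h : IsLift η ξ) (x : ℤ) :
    ξ x - ξ (x-1) ≤ 1 ∧ -1 ≤ ξ x - ξ (x - 1) := by
  rw [h x]
  rcases valZ_cases (η x) with h | h <;> rw [h] <;> norm_num

lemma lift_lip_nat {η : Cfg} {ξ : ℤ → ℤ} (h : IsLift η ξ) (n : ℕ) (x : ℤ) :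
    |ξ (x + n) - ξ x| ≤ n := by
  induction n with
  | zero => simp
  | succ n ih =>
    have := lift_step h (x + (n+1))
    rw [show x + ((n:ℤ)+1) - 1 = x + n by ring] at this
    push_cast
    rw [abs_le] at *
    omega

lemma lift_lip {η : Cfg} {ξ : ℤ → ℤ} (h : IsLift η ξ) (n x : ℤ) :
    |ξ (x + n) - ξ x| ≤ |n| := by
  rcases le_total 0 n with hn | hn
  · lift n to ℕ using hn
    simpa using lift_lip_nat h n x
  · obtain ⟨m, rfl⟩ : ∃ m : ℕ, n = -m := ⟨n.natAbs, by omega⟩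
    have := lift_lip_nat h m (x + -m)
    rw [abs_sub_comm] at this
    simpa using this

lemma inXlam_iff {η : Cfg} {ξ : ℤ → ℤ} (h : IsLift η ξ) (lam : ℝ) :
    inXlam lam η ↔
      Tendsto (fun y : ℕ => (ξ (-(y:ℤ)) : ℝ) / (y : ℝ)) atTop (nhds (1 - 2 * lam)) ∧
      Tendsto (fun y : ℕ => (ξ (y:ℤ) : ℝ) / (y : ℝ)) atTop (nhds (2 * lam - 1)) := by
  have hone : Tendsto (fun y : ℕ => (y:ℝ) / (y:ℝ)) atTop (nhds 1) := by
    refine tendsto_const_nhds.congr' ?_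
    filter_upwards [eventually_ge_atTop 1] with y hy
    have : (y:ℝ) ≠ 0 := by positivity
    field_simp
  have sumR : ∀ z x : ℤ, z - 1 ≤ x →
      2 * ∑ y ∈ Finset.Icc z x, valR (η y) = (ξ x : ℝ) - ξ (z - 1) + (x + 1 - z) := by
    intro z x hzx
    have := lift_sum h z x hzx
    rw [Finset.sum_sub_distrib, ← Finset.mul_sum] at this
    simp only [Finset.sum_const, Int.card_Icc, nsmul_eq_mul, mul_one] at this
    rw [Int.toNat_of_nonneg (by omega)] at this
    have h3 : ((2 * ∑ y ∈ Finset.Icc z x, valZ (η y) : ℤ) : ℝ)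
      = 2 * ∑ y ∈ Finset.Icc z x, valR (η y) := by
      push_cast; simp [valZ_cast]
    rw [← h3]
    have h4 : 2 * ∑ y ∈ Finset.Icc z x, valZ (η y) = ξ x - ξ (z-1) + (x + 1 - z) := by linarith
    rw [h4]; push_cast; ring
  have lip : ∀ n x : ℤ, |(ξ (x + n) : ℝ) - ξ x| ≤ |(n:ℝ)| := by
    intro n x; exact_mod_cast lift_lip h n x
  have L : Tendsto (fun y : ℕ => (∑ x ∈ Finset.Icc (-(y : ℤ)) 0, valR (η x)) / (y : ℝ))
    atTop (nhds lam) ↔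
      Tendsto (fun y : ℕ => (ξ (-(y:ℤ)) : ℝ) / (y : ℝ)) atTop (nhds (1 - 2 * lam)) := by
    have hb : ∀ y : ℕ, |(y - 2 * ∑ x ∈ Finset.Icc (-(y : ℤ)) 0, valR (η x)) - (ξ (-(y:ℤ)) : ℝ)|
        ≤ |(ξ 0 : ℝ)| + 2 := by
      intro y
      rw [sumR _ _ (by omega)]
      have := lip (-1) (-y)
      rw [show (-(y:ℤ)) + (-1) = -(y:ℤ) - 1 by ring] at this
      push_cast at this ⊢
      have e : (y - ((ξ 0:ℝ) - (ξ (-(y:ℤ) - 1)) + (0 + 1 - -(y:ℝ)))) - (ξ (-(y:ℤ)) : ℝ)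
        = ((ξ (-(y:ℤ) - 1):ℝ) - (ξ (-(y:ℤ)) : ℝ)) - ξ 0 - 1 := by ring
      rw [e]
      have h5 := neg_abs_le (ξ 0 : ℝ)
      have h6 := le_abs_self (ξ 0 : ℝ)
      norm_num at this
      rw [abs_le] at *
      constructor <;> linarith
    constructor
    · intro H
      have h1 := hone.sub (H.const_mul 2)
      refine bdd_tend (u := fun y : ℕ => y - 2 * ∑ x ∈ Finset.Icc (-(y : ℤ)) 0, valR (η x))
        (C := |(ξ 0 : ℝ)| + 2) (fun y => by rw [abs_sub_comm]; exact hb y) ?_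
      refine h1.congr fun y => by ring
    · intro H
      have h1 := bdd_tend hb H
      have h2 := (hone.sub h1).mul_const (1/2)
      rw [show (1 - (1 - 2 * lam)) * (1/2) = lam by ring] at h2
      refine h2.congr fun y => by ring
  have R : Tendsto (fun y : ℕ => (∑ x ∈ Finset.Icc (0:ℤ) (y:ℤ), valR (η x)) / (y : ℝ))
    atTop (nhds lam) ↔
      Tendsto (fun y : ℕ => (ξ (y:ℤ) : ℝ) / (y : ℝ)) atTop (nhds (2 * lam - 1)) := by
    have hb : ∀ y : ℕ, |(2 * ∑ x ∈ Finset.Icc (0:ℤ) (y:ℤ), valR (η x) - y) - (ξ (y:ℤ) : ℝ)|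
        ≤ |(ξ (0-1) : ℝ)| + 1 := by
      intro y
      rw [sumR _ _ (by omega)]
      have h5 := neg_abs_le (ξ (0-1) : ℝ)
      have h6 := le_abs_self (ξ (0-1) : ℝ)
      rw [Int.cast_natCast, Int.cast_zero, abs_le]
      constructor <;> linarith
    constructor
    · intro H
      have h1 := (H.const_mul 2).sub hone
      refine bdd_tend (u := fun y : ℕ => 2 * ∑ x ∈ Finset.Icc (0:ℤ) (y:ℤ), valR (η x) - y)
        (C := |(ξ (0-1) : ℝ)| + 1) (fun y => by rw [abs_sub_comm]; exact hb y) ?_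
      refine h1.congr fun y => by ring
    · intro H
      have h1 := bdd_tend hb H
      have h2 := (hone.add h1).mul_const (1/2)
      rw [show (1 + (2 * lam - 1)) * (1/2) = lam by ring] at h2
      refine h2.congr fun y => by ring
  rw [inXlam, L, R]

lemma inX_shift {η : Cfg} (n : ℤ) (h : inX η) : inX (shiftBy n η) := by
  obtain ⟨lam, h0, h1, h2⟩ := h
  refine ⟨lam, h0, h1, ?_⟩
  rw [inXlam_iff (lift_xi0 η)] at h2
  rw [inXlam_iff (lift_shift (lift_xi0 η) n 0)]
  have lip : ∀ n x : ℤ, |(xi0 η (x + n) : ℝ) - xi0 η x| ≤ |(n:ℝ)| := by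
    intro n x; exact_mod_cast lift_lip (lift_xi0 η) n x
  constructor
  · refine bdd_tend (C := |(n:ℝ)|) (fun y => ?_) h2.1
    simpa using lip n (-y)
  · refine bdd_tend (C := |(n:ℝ)|) (fun y => ?_) h2.2
    simpa using lip n y

lemma tendsto_of_lin {f : ℤ → ℤ} {a : ℝ} (ha : 0 < a) {N : ℕ}
    (h : ∀ y : ℕ, N ≤ y → a * y ≤ f (-(y:ℤ))) : Tendsto f atBot atTop := by
  rw [tendsto_atBot_atTop]
  intro b
  obtain ⟨M, hM⟩ := exists_nat_ge ((b:ℝ) / a)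
  refine ⟨-(max N M : ℕ), fun x hx => ?_⟩
  obtain ⟨y, rfl⟩ : ∃ y : ℕ, x = -y := ⟨x.natAbs, by omega⟩
  have hy : max N M ≤ y := by omega
  have h1 := h y (le_trans (le_max_left _ _) hy)
  have h2 : (M:ℝ) ≤ y := by exact_mod_cast le_trans (le_max_right _ _) hy
  rw [div_le_iff₀ ha] at hM
  have : (b:ℝ) ≤ f (-(y:ℤ)) := by nlinarith
  exact_mod_cast this

lemma runMin_spec {ξ : ℤ → ℤ} (h : Tendsto ξ atBot atTop) (x : ℤ) :
    (∃ y ≤ x, ξ y = runMin ξ x) ∧ ∀ y ≤ x, runMin ξ x ≤ ξ y := by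
  have hb : BddBelow (ξ '' Set.Iic x) := by
    obtain ⟨i, hi⟩ := (tendsto_atBot_atTop.1 h) 0
    have hfin : (ξ '' Set.Icc i x).Finite := (Set.finite_Icc i x).image _
    obtain ⟨m, hm⟩ := hfin.bddBelow
    refine ⟨min m 0, ?_⟩
    rintro _ ⟨y, hy, rfl⟩
    by_cases hyi : y ≤ i
    · exact le_trans (min_le_right _ _) (hi y hyi)
    · exact le_trans (min_le_left _ _) (hm ⟨y, ⟨by omega, hy⟩, rfl⟩)
  have hne : (ξ '' Set.Iic x).Nonempty := ⟨_, x, le_refl x, rfl⟩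
  constructor
  · obtain ⟨y, hy, e⟩ := Int.csInf_mem hne hb
    exact ⟨y, hy, e⟩
  · intro y hy
    exact csInf_le hb ⟨y, hy, rfl⟩

lemma runMin_eq {ξ : ℤ → ℤ} (h : Tendsto ξ atBot atTop) {x m : ℤ}
    (h1 : ∃ y ≤ x, ξ y = m) (h2 : ∀ y ≤ x, m ≤ ξ y) : runMin ξ x = m := by
  obtain ⟨⟨y, hy, e⟩, h3⟩ := runMin_spec h x
  obtain ⟨y', hy', e'⟩ := h1
  have a := h2 y hy
  have b := h3 y' hy'
  omega

lemma lift_liftT {η : Cfg} {ξ : ℤ → ℤ} (h : IsLift η ξ) (ht : Tendsto ξ atBot atTop) :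
    IsLift (bbsT η) (liftT ξ) := by
  intro x
  have hx := h x
  obtain ⟨⟨y, hy, e⟩, h3⟩ := runMin_spec ht (x-1)
  have hst := lift_step h x
  by_cases hr : isRecord η x
  · have hT : bbsT η x = false := by simp [bbsT, hr]
    rw [record_iff h] at hr
    have h4 := hr (x-1) (by omega)
    have h5 := hr y (by omega)
    have h6 := h3 (x-1) le_rfl
    have : runMin ξ x = ξ x := by
      apply runMin_eq ht ⟨x, le_rfl, rfl⟩
      intro z hz
      rcases lt_or_eq_of_le hz with h | h
      · exact (hr z h).le
      · rw [h]
    simp only [liftT, hT, this, valZ]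
    simp
    omega
  · have hT : bbsT η x = !(η x) := by simp [bbsT, hr]
    rw [record_iff h] at hr
    push Not at hr
    obtain ⟨z, hz, hzx⟩ := hr
    have : runMin ξ x = runMin ξ (x-1) := by
      apply runMin_eq ht ⟨y, by omega, e⟩
      intro w hw
      rcases lt_or_eq_of_le hw with h | h
      · exact h3 w (by omega)
      · rw [h]; exact le_trans (h3 z (by omega)) hzx
    have hv : valZ (!(η x)) = 1 - valZ (η x) := by cases η x <;> simp [valZ]
    simp only [liftT, hT, this, hv]
    omega

lemma inX_lift {η : Cfg} {ξ : ℤ → ℤ} (hX : inX η) (h : IsLift η ξ) :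
    Tendsto ξ atBot atTop ∧ Tendsto (liftT ξ) atBot atTop ∧ ∀ b : ℤ, ∃ x : ℤ, ξ x ≤ b := by
  obtain ⟨lam, h0, h1, h2⟩ := hX
  rw [inXlam_iff h] at h2
  obtain ⟨hl, hr⟩ := h2
  set c := 1 - 2 * lam with hc
  have hcp : 0 < c := by rw [hc]; linarith
  have e1 := hl.eventually (Ioo_mem_nhds (show 5/6 * c < c by linarith)
    (show c < 7/6 * c by linarith))
  obtain ⟨N, hN⟩ := eventually_atTop.1 (e1.and (eventually_ge_atTop 1))
  have hN2 : ∀ y : ℕ, N ≤ y → 5/6 * c * y ≤ ξ (-(y:ℤ)) ∧ ξ (-(y:ℤ)) ≤ 7/6 * c * y := by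
    intro y hy
    obtain ⟨⟨ha, hb⟩, hp⟩ := hN y hy
    have hyp : (0:ℝ) < y := by exact_mod_cast hp
    rw [lt_div_iff₀ hyp] at ha
    rw [div_lt_iff₀ hyp] at hb
    exact ⟨ha.le, hb.le⟩
  have t1 : Tendsto ξ atBot atTop :=
    tendsto_of_lin (a := 5/6 * c) (by positivity) (N := N) fun y hy => (hN2 y hy).1
  refine ⟨t1, ?_, ?_⟩
  · refine tendsto_of_lin (a := 1/2 * c) (by positivity) (N := N) fun y hy => ?_
    obtain ⟨⟨w, hw, e⟩, -⟩ := runMin_spec t1 (-(y:ℤ))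
    obtain ⟨v, rfl⟩ : ∃ v : ℕ, w = -v := ⟨w.natAbs, by omega⟩
    have hvy : y ≤ v := by omega
    have a := (hN2 v (le_trans hy hvy)).1
    have b := (hN2 y hy).2
    have hvy' : (y:ℝ) ≤ v := by exact_mod_cast hvy
    simp only [liftT, ← e]
    push_cast
    nlinarith
  · intro b
    have e2 := hr.eventually (gt_mem_nhds (show 2 * lam - 1 < - (c/2) by rw [hc] at *; linarith))
    obtain ⟨M, hM⟩ := exists_nat_ge (-(b:ℝ) / (c/2))
    obtain ⟨y, hy1, hy2, hy3⟩ := (e2.and ((eventually_ge_atTop 1).and (eventually_ge_atTop M))).exists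
    have hyp : (0:ℝ) < y := by exact_mod_cast hy2
    refine ⟨y, ?_⟩
    rw [div_lt_iff₀ hyp] at hy1
    rw [div_le_iff₀ (by positivity)] at hM
    have : (M:ℝ) ≤ y := by exact_mod_cast hy3
    have : (ξ y : ℝ) ≤ b := by nlinarith
    exact_mod_cast this

/-- discrete intermediate value -/
lemma hit_exists {η : Cfg} {ξ : ℤ → ℤ} (h : IsLift η ξ) (ht : Tendsto ξ atBot atTop)
    {j z : ℤ} (hz : ξ z ≤ j) : ∃ w ≤ z, ξ w = j := by
  by_contra hcon
  push Not at hcon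
  have key : ∀ w ≤ z, ξ w < j := by
    intro w hw
    induction w, hw using Int.leInductionDown with
    | base => exact lt_of_le_of_ne hz (hcon z le_rfl)
    | pred n hn ih =>
      have := lift_step h n
      have := hcon (n-1) (by omega)
      omega
  obtain ⟨i, hi⟩ := (tendsto_atBot_atTop.1 ht) j
  have := hi (min i z) (min_le_left _ _)
  have := key (min i z) (min_le_right _ _)
  omega

lemma recPos_spec {η : Cfg} {ξ : ℤ → ℤ} (h : IsLift η ξ) (ht : Tendsto ξ atBot atTop)
    {j x : ℤ} (hx : ξ x ≤ -j) :
    ξ (recPos ξ j) = -j ∧ (∀ z, ξ z ≤ -j → recPos ξ j ≤ z) := by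
  obtain ⟨i, hi⟩ := (tendsto_atBot_atTop.1 ht) (-j + 1)
  have hb : BddBelow {x : ℤ | ξ x = -j} := by
    refine ⟨i, fun w hw => ?_⟩
    by_contra hc
    have := hi w (by omega)
    simp only [Set.mem_ofPred_eq] at hw
    omega
  obtain ⟨w, -, hw⟩ := hit_exists h ht hx
  refine ⟨Int.csInf_mem ⟨w, hw⟩ hb, fun z hz => ?_⟩
  obtain ⟨v, hv, e⟩ := hit_exists h ht hz
  exact le_trans (csInf_le hb e) hv

lemma rFirst_eq {η : Cfg} {ξ : ℤ → ℤ} (h : IsLift η ξ) {p q : ℤ} (hp : ξ p = 0)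
    (hp2 : ∀ z, ξ z ≤ 0 → p ≤ z) (hq : ξ q = -1) (hq2 : ∀ z, ξ z ≤ -1 → q ≤ z) :
    rFirst (shiftBy p η) = q - p := by
  have hpq : p ≤ q := hp2 q (by omega)
  have hne : p ≠ q := by rintro rfl; omega
  have hl : IsLeast {x : ℤ | 1 ≤ x ∧ isRecord (shiftBy p η) x} (q - p) := by
    refine ⟨⟨by omega, ?_⟩, ?_⟩
    · rw [record_shift, record_iff h]
      intro z hz
      by_contra hc
      simp only [sub_add_cancel] at hz hc
      have := hq2 z (by omega)
      omega
    · rintro x ⟨h1, h2⟩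
      rw [record_shift, record_iff h] at h2
      have := h2 p (by omega)
      have := hq2 (x + p) (by omega)
      omega
  exact hl.csInf_eq

lemma shiftBy_zero (η : Cfg) : shiftBy 0 η = η := by funext x; simp [shiftBy]

/-- Deterministic facts on a configuration in `𝒳̂`. -/
lemma det_facts {η : Cfg} (hη : η ∈ XhatSet) :
    1 ≤ rFirst η ∧ recPos (liftT (xi0 η)) 0 ≤ 0 ∧
    recPos (liftT (xi0 η)) 0 ≤ recPos (liftT (xi0 η)) 1 ∧
    recPos (liftT (xi0 η)) 1 ≤ rFirst η ∧
    rFirst (That η) = recPos (liftT (xi0 η)) 1 - recPos (liftT (xi0 η)) 0 ∧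
    recPos (liftT (xi0 (thetaHat η))) 0 = recPos (liftT (xi0 η)) 1 - rFirst η := by
  obtain ⟨hX, h0⟩ := hη
  set ξ := xi0 η with hξ
  have hl : IsLift η ξ := lift_xi0 η
  obtain ⟨t1, t2, t3⟩ := inX_lift hX hl
  have hlT := lift_liftT hl t1
  have hz : ξ 0 = 0 := xi0_zero η
  rw [record_iff hl] at h0
  obtain ⟨x, hx⟩ := t3 (-1)
  obtain ⟨q1, q2⟩ := recPos_spec (j := 1) hl t1 hx
  have hp2 : ∀ z, ξ z ≤ 0 → 0 ≤ z := by
    intro z hz'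
    by_contra hc
    have := h0 z (by omega)
    omega
  have hr := rFirst_eq hl hz hp2 q1 q2
  rw [shiftBy_zero, sub_zero] at hr
  have hq0 : 0 ≤ recPos ξ 1 := hp2 _ (by omega)
  have hqne : recPos ξ 1 ≠ 0 := by intro h; rw [h] at q1; omega
  have m0 : runMin ξ 0 = 0 := by
    apply runMin_eq t1 ⟨0, le_rfl, hz⟩
    intro y hy
    by_contra hc
    have := hp2 y (by omega)
    have : y = 0 := by omega
    subst this; omega
  have m1 : runMin ξ (recPos ξ 1) = -1 := by
    apply runMin_eq t1 ⟨_, le_rfl, q1⟩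
    intro y hy
    by_contra hc
    have := q2 y (by omega)
    have : y = recPos ξ 1 := by omega
    subst this; omega
  have T0 : liftT ξ 0 = 0 := by simp [liftT, m0, hz]
  have T1 : liftT ξ (recPos ξ 1) = -1 := by simp [liftT, m1, q1]
  obtain ⟨a1, a2⟩ := recPos_spec (j := 0) hlT t2 (x := 0) (by omega)
  obtain ⟨b1, b2⟩ := recPos_spec (j := 1) hlT t2 (x := recPos ξ 1) (by omega)
  simp only [neg_zero] at a1 a2
  refine ⟨by omega, a2 0 (by omega), a2 _ (by omega), ?_, ?_, ?_⟩
  · rw [hr]; exact b2 _ (by omega)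
  · exact rFirst_eq hlT a1 a2 b1 b2
  · have hX' : inX (thetaHat η) := inX_shift _ hX
    have hl' := lift_xi0 (thetaHat η)
    obtain ⟨s1, s2, -⟩ := inX_lift hX' hl'
    have hxi : ∀ x, xi0 (thetaHat η) x = ξ (x + rFirst η) + 1 := by
      intro x
      rw [thetaHat, xi0_shift, hr, ← hξ, q1]; ring
    have hrm : ∀ x, runMin (xi0 (thetaHat η)) x = runMin ξ (x + rFirst η) + 1 := by
      intro x
      obtain ⟨⟨y, hy, e⟩, h3⟩ := runMin_spec t1 (x + rFirst η)
      apply runMin_eq s1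
      · refine ⟨y - rFirst η, by omega, ?_⟩
        rw [hxi, sub_add_cancel, e]
      · intro z hz
        rw [hxi]
        have := h3 (z + rFirst η) (by omega)
        omega
    have hLT : ∀ x, liftT (xi0 (thetaHat η)) x = liftT ξ (x + rFirst η) + 1 := by
      intro x
      simp only [liftT, hrm, hxi]; ring
    have w : liftT (xi0 (thetaHat η)) (recPos (liftT ξ) 1 - rFirst η) ≤ -0 := by
      rw [hLT, sub_add_cancel, b1]; norm_num
    obtain ⟨c1, c2⟩ := recPos_spec (j := 0) (lift_liftT hl' s1) s2 w
    have d1 := c2 _ w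
    rw [hLT] at c1
    have d2 := b2 (recPos (liftT (xi0 (thetaHat η))) 0 + rFirst η) (by omega)
    omega


/-! ## Measurability -/

lemma meas_sInf {S : Cfg → Set ℤ} (hS : ∀ n, MeasurableSet {η | n ∈ S η}) :
    Measurable fun η => sInf (S η) := by
  let B : ℤ → Set Cfg := fun n => {η | n ∈ S η ∧ ∀ m, m < n → m ∉ S η}
  have hB : ∀ n, MeasurableSet (B n) := by
    intro n
    have : B n = {η | n ∈ S η} ∩ ⋂ m : ℤ, ⋂ _ : m < n, {η | m ∈ S η}ᶜ := by
      ext η; simp [B]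
    rw [this]
    exact (hS n).inter (MeasurableSet.iInter fun m => MeasurableSet.iInter fun _ => (hS m).compl)
  have hBe : ∀ n η, η ∈ B n → sInf (S η) = n := by
    rintro n η ⟨h1, h2⟩
    have : IsLeast (S η) n := ⟨h1, fun m hm => by
      by_contra hc
      exact h2 m (by omega) hm⟩
    exact this.csInf_eq
  have hBn : ∀ η, (∀ n, η ∉ B n) → sInf (S η) = 0 := by
    intro η h
    by_cases hne : (S η).Nonempty
    · by_cases hb : BddBelow (S η)
      · exfalso
        refine h (sInf (S η)) ⟨Int.csInf_mem hne hb, fun m hm hmS => ?_⟩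
        have := csInf_le hb hmS
        omega
      · exact Int.csInf_of_not_bddBelow hb
    · rw [Set.not_nonempty_iff_eq_empty] at hne
      rw [hne]; exact Int.csInf_empty
  refine measurable_to_countable' fun n => ?_
  by_cases hn : n = 0
  · have : (fun η => sInf (S η)) ⁻¹' {n} = B 0 ∪ (⋃ m, B m)ᶜ := by
      ext η
      simp only [Set.mem_preimage, Set.mem_singleton_iff, Set.mem_union, Set.mem_compl_iff,
        Set.mem_iUnion, not_exists, hn]
      constructor
      · intro h
        by_cases h2 : ∀ m, η ∉ B m
        · exact Or.inr h2
        · push Not at h2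
          obtain ⟨m, hm⟩ := h2
          have := hBe m η hm
          left
          rw [h] at this
          rw [this]; exact hm
      · rintro (h | h)
        · exact hBe _ _ h
        · exact hBn _ h
    rw [this]
    exact (hB 0).union (MeasurableSet.iUnion hB).compl
  · have : (fun η => sInf (S η)) ⁻¹' {n} = B n := by
      ext η
      simp only [Set.mem_preimage, Set.mem_singleton_iff]
      constructor
      · intro h
        by_cases h2 : ∀ m, η ∉ B m
        · exact absurd (h.symm.trans (hBn _ h2)) hn
        · push Not at h2
          obtain ⟨m, hm⟩ := h2
          have := hBe m η hm
          rw [h] at this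
          rw [this]; exact hm
      · exact hBe _ _
    rw [this]; exact hB n

lemma meas_valZ (y : ℤ) : Measurable fun η : Cfg => valZ (η y) :=
  (measurable_of_countable valZ).comp (measurable_pi_apply y)

lemma meas_valR (y : ℤ) : Measurable fun η : Cfg => valR (η y) :=
  (measurable_of_countable valR).comp (measurable_pi_apply y)

lemma meas_record (x : ℤ) : MeasurableSet {η : Cfg | isRecord η x} := by
  have : {η : Cfg | isRecord η x} = ⋂ z : ℤ, ⋂ _ : z ≤ x, {η : Cfg |
      (∑ y ∈ Finset.Icc z x, valZ (η y)) < ∑ y ∈ Finset.Icc z x, (1 - valZ (η y))} := by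
    ext η; simp [isRecord]
  rw [this]
  refine MeasurableSet.iInter fun z => MeasurableSet.iInter fun _ => measurableSet_lt ?_ ?_
  · exact Finset.measurable_sum _ fun y _ => meas_valZ y
  · exact Finset.measurable_sum _ fun y _ => measurable_const.sub (meas_valZ y)

lemma meas_rFirst : Measurable rFirst := by
  refine meas_sInf fun n => ?_
  have : {η : Cfg | n ∈ {x : ℤ | 1 ≤ x ∧ isRecord η x}} =
    {η : Cfg | 1 ≤ n} ∩ {η : Cfg | isRecord η n} := rfl
  rw [this]
  exact (MeasurableSet.const _).inter (meas_record n)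

lemma meas_xi0 (x : ℤ) : Measurable fun η : Cfg => xi0 η x := by
  unfold xi0
  split_ifs
  · exact Finset.measurable_sum _ fun y _ => ((meas_valZ y).const_mul 2).sub_const 1
  · exact (Finset.measurable_sum _ fun y _ => ((meas_valZ y).const_mul 2).sub_const 1).neg

lemma meas_runMin (x : ℤ) : Measurable fun η : Cfg => runMin (xi0 η) x := by
  unfold runMin
  simp_rw [sInf_image']
  exact Measurable.iInf fun i => meas_xi0 i

lemma meas_liftT (x : ℤ) : Measurable fun η : Cfg => liftT (xi0 η) x :=
  ((meas_runMin x).const_mul 2).sub (meas_xi0 x)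

lemma meas_psi : Measurable fun η : Cfg => recPos (liftT (xi0 η)) 0 := by
  refine meas_sInf fun n => ?_
  exact measurableSet_eq_fun (meas_liftT n) measurable_const

lemma meas_bbsT : Measurable bbsT := by
  refine measurable_pi_lambda _ fun x => ?_
  unfold bbsT
  exact Measurable.ite (meas_record x) measurable_const
    ((measurable_of_countable (fun b : Bool => !b)).comp (measurable_pi_apply x))

lemma meas_eval {β : Type*} [MeasurableSpace β] {g : Cfg → ℤ → β} {n : Cfg → ℤ}
    (hg : ∀ k, Measurable fun η => g η k) (hn : Measurable n) :
    Measurable fun η => g η (n η) := by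
  have : Measurable (fun p : Cfg × ℤ => g p.1 p.2) := measurable_from_prod_countable_left hg
  exact this.comp (measurable_id.prodMk hn)

lemma meas_shiftBy (n : ℤ) : Measurable (shiftBy n) :=
  measurable_pi_lambda _ fun y => measurable_pi_apply (y + n)

lemma meas_thetaHat : Measurable thetaHat :=
  meas_eval (g := fun η n => shiftBy n η) meas_shiftBy meas_rFirst

lemma meas_That : Measurable That :=
  meas_eval (g := fun η n => shiftBy n (bbsT η)) (fun n => (meas_shiftBy n).comp meas_bbsT) meas_psi

lemma meas_Xset : MeasurableSet Xset := by
  let f : ℕ → Cfg → ℝ := fun y η => (∑ x ∈ Finset.Icc (-(y : ℤ)) 0, valR (η x)) / (y : ℝ)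
  let g : ℕ → Cfg → ℝ := fun y η => (∑ x ∈ Finset.Icc (0 : ℤ) (y : ℤ), valR (η x)) / (y : ℝ)
  have hf : ∀ y, Measurable (f y) := fun y =>
    (Finset.measurable_sum _ fun x _ => meas_valR x).div_const _
  have hg : ∀ y, Measurable (g y) := fun y =>
    (Finset.measurable_sum _ fun x _ => meas_valR x).div_const _
  have lf : Measurable fun η => limUnder atTop (f · η) :=
    (StronglyMeasurable.limUnder fun y => (hf y).stronglyMeasurable).measurable
  have lg : Measurable fun η => limUnder atTop (g · η) :=
    (StronglyMeasurable.limUnder fun y => (hg y).stronglyMeasurable).measurable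
  have : Xset = ({η | ∃ c, Tendsto (f · η) atTop (nhds c)} ∩
      {η | ∃ c, Tendsto (g · η) atTop (nhds c)}) ∩
      ({η | limUnder atTop (f · η) = limUnder atTop (g · η)} ∩
       (fun η => limUnder atTop (f · η)) ⁻¹' Set.Ioo 0 (1/2)) := by
    ext η
    constructor
    · rintro ⟨l, h0, h1, h2, h3⟩
      refine ⟨⟨⟨l, h2⟩, ⟨l, h3⟩⟩, ?_, ?_⟩
      · exact h2.limUnder_eq.trans h3.limUnder_eq.symm
      · rw [Set.mem_preimage]
        rw [show limUnder atTop (f · η) = l from h2.limUnder_eq]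
        exact ⟨h0, h1⟩
    · rintro ⟨⟨⟨l, h2⟩, ⟨l', h3⟩⟩, h4, h5⟩
      have h4' : limUnder atTop (f · η) = limUnder atTop (g · η) := h4
      rw [h2.limUnder_eq, h3.limUnder_eq] at h4'
      rw [Set.mem_preimage, h2.limUnder_eq] at h5
      subst h4'
      exact ⟨l, h5.1, h5.2, h2, h3⟩
  rw [this]
  exact ((measurableSet_exists_tendsto hf).inter (measurableSet_exists_tendsto hg)).inter
    ((measurableSet_eq_fun lf lg).inter (lf measurableSet_Ioo))

lemma meas_Xhat : MeasurableSet XhatSet := meas_Xset.inter (meas_record 0)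

/-! ## Coboundary argument -/

lemma min_tsub_mono (a b : ENNReal) :
    Monotone fun n : ℕ => min a (n : ENNReal) - min b (n : ENNReal) := by
  intro n m hnm
  have h : (n : ENNReal) ≤ m := by exact_mod_cast hnm
  simp only
  rcases le_total b n with hb | hb
  · rw [min_eq_left hb, min_eq_left (hb.trans h)]
    exact tsub_le_tsub_right (min_le_min le_rfl h) _
  · rw [min_eq_right hb, tsub_eq_zero_of_le (min_le_right _ _)]
    exact zero_le

lemma lint_sup {μ : Measure Cfg} {a b : Cfg → ENNReal} (ha : Measurable a) (hb : Measurable b)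
    (fa : ∀ η, a η ≠ ⊤) (fb : ∀ η, b η ≠ ⊤) :
    ∫⁻ η, (a η - b η) ∂μ =
      ⨆ n : ℕ, ∫⁻ η, (min (a η) (n : ENNReal) - min (b η) (n : ENNReal)) ∂μ := by
  rw [← lintegral_iSup]
  · refine lintegral_congr fun η => ?_
    apply le_antisymm
    · obtain ⟨N, hN⟩ := ENNReal.exists_nat_gt (max_lt (fa η).lt_top (fb η).lt_top).ne
      refine le_iSup_of_le N ?_
      rw [min_eq_left ((le_max_left _ _).trans hN.le), min_eq_left ((le_max_right _ _).trans hN.le)]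
    · refine iSup_le fun n => ?_
      rcases le_total (b η) n with h | h
      · rw [min_eq_left h]
        exact tsub_le_tsub_right (min_le_left _ _) _
      · rw [min_eq_right h, tsub_eq_zero_of_le (min_le_right _ _)]
        exact zero_le
  · exact fun n => (ha.min measurable_const).sub (hb.min measurable_const)
  · intro n m hnm η
    exact min_tsub_mono _ _ hnm

lemma coboundary {μ : Measure Cfg} [IsProbabilityMeasure μ] {S : Cfg → Cfg} (hS : Measurable S)
    (hinv : μ.map S = μ) {F G H : Cfg → ENNReal} (hF : Measurable F) (hG : Measurable G)
    (hH : Measurable H) (fH : ∀ η, H η ≠ ⊤) (hFi : ∫⁻ η, F η ∂μ ≠ ⊤)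
    (he : ∀ᵐ η ∂μ, F η + H η = G η + H (S η)) : ∫⁻ η, F η ∂μ = ∫⁻ η, G η ∂μ := by
  have hHS : Measurable fun η => H (S η) := hH.comp hS
  have pq : ∫⁻ η, (H (S η) - H η) ∂μ = ∫⁻ η, (H η - H (S η)) ∂μ := by
    rw [lint_sup hHS hH (fun η => fH _) fH, lint_sup hH hHS fH (fun η => fH _)]
    congr 1
    funext n
    have m1 : Measurable fun η => min (H η) (n : ENNReal) := hH.min measurable_const
    have m2 : Measurable fun η => min (H (S η)) (n : ENNReal) := hHS.min measurable_const
    have e1 : ∫⁻ η, min (H (S η)) (n : ENNReal) ∂μ = ∫⁻ η, min (H η) (n : ENNReal) ∂μ := by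
      conv_rhs => rw [← hinv]
      rw [lintegral_map m1 hS]
    have fin : ∫⁻ η, min (H η) (n : ENNReal) ∂μ ≠ ⊤ := by
      refine ne_top_of_le_ne_top (ENNReal.natCast_ne_top n) ?_
      calc ∫⁻ η, min (H η) (n : ENNReal) ∂μ ≤ ∫⁻ _, (n : ENNReal) ∂μ :=
            lintegral_mono fun η => min_le_right _ _
        _ = n := by simp
    have e2 : ∫⁻ η, min (H η) (n : ENNReal) ∂μ
          + ∫⁻ η, (min (H (S η)) (n : ENNReal) - min (H η) (n : ENNReal)) ∂μ
        = ∫⁻ η, min (H (S η)) (n : ENNReal) ∂μ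
          + ∫⁻ η, (min (H η) (n : ENNReal) - min (H (S η)) (n : ENNReal)) ∂μ := by
      rw [← lintegral_add_left m1, ← lintegral_add_left m2]
      refine lintegral_congr fun η => ?_
      rw [add_tsub_eq_max, add_tsub_eq_max, max_comm]
    rw [e1] at e2
    exact (ENNReal.add_right_inj fin).1 e2
  have e3 : ∀ᵐ η ∂μ, F η + (H η - H (S η)) = G η + (H (S η) - H η) := by
    filter_upwards [he] with η h
    have h1 : H η + (H (S η) - H η) = H (S η) + (H η - H (S η)) := by
      rw [add_tsub_eq_max, add_tsub_eq_max, max_comm]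
    have h2 : H (S η) + (F η + (H η - H (S η))) = H (S η) + (G η + (H (S η) - H η)) := by
      calc H (S η) + (F η + (H η - H (S η))) = F η + (H (S η) + (H η - H (S η))) := by ring
        _ = F η + H η + (H (S η) - H η) := by rw [← h1]; ring
        _ = H (S η) + (G η + (H (S η) - H η)) := by rw [h]; ring
    exact (ENNReal.add_right_inj (fH _)).1 h2
  have pF : ∫⁻ η, (H (S η) - H η) ∂μ ≤ ∫⁻ η, F η ∂μ := by
    refine lintegral_mono_ae ?_
    filter_upwards [he] with η h
    rw [tsub_le_iff_right, h]
    exact le_add_self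
  have e4 := lintegral_congr_ae e3
  rw [lintegral_add_left hF, lintegral_add_left hG, ← pq] at e4
  exact (ENNReal.add_left_inj (ne_top_of_le_ne_top hFi pF)).1 e4

lemma meas_ind {A : Set Cfg} (hA : MeasurableSet A) (i : ℤ) :
    Measurable fun η => A.indicator (fun _ => (1 : ENNReal)) (shiftBy i η) :=
  (measurable_const.indicator hA).comp (meas_shiftBy i)

lemma meas_palm {A : Set Cfg} (hA : MeasurableSet A) :
    Measurable fun η => ∑ i ∈ Finset.Icc (1 : ℤ) (rFirst η),
        A.indicator (fun _ => (1 : ENNReal)) (shiftBy i η) :=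
  meas_eval (g := fun η n => ∑ i ∈ Finset.Icc (1 : ℤ) n,
    A.indicator (fun _ => (1 : ENNReal)) (shiftBy i η))
    (fun n => Finset.measurable_sum _ fun i _ => meas_ind hA i) meas_rFirst

lemma sum_shift (f : ℤ → ENNReal) (a b c : ℤ) :
    ∑ i ∈ Finset.Icc a b, f (i + c) = ∑ i ∈ Finset.Icc (a + c) (b + c), f i := by
  rw [← Finset.map_add_right_Icc, Finset.sum_map]
  rfl

lemma sum_split (f : ℤ → ENNReal) {a b c : ℤ} (hab : a ≤ b) (hbc : b ≤ c) :
    ∑ i ∈ Finset.Icc (a + 1) c, f i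
      = ∑ i ∈ Finset.Icc (a + 1) b, f i + ∑ i ∈ Finset.Icc (b + 1) c, f i := by
  rw [← Finset.sum_union]
  · congr 1
    ext x; simp only [Finset.mem_Icc, Finset.mem_union]; omega
  · rw [Finset.disjoint_left]
    intro x h1 h2
    simp only [Finset.mem_Icc] at h1 h2
    omega

lemma sum_one_Icc (n : ℤ) : ∑ _i ∈ Finset.Icc (1:ℤ) n, (1 : ENNReal) = (n.toNat : ENNReal) := by
  simp

lemma palm_le (A : Set Cfg) (f : ℤ → Cfg) (n : ℤ) : ∑ i ∈ Finset.Icc (1:ℤ) n,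
    A.indicator (fun _ => (1 : ENNReal)) (f i) ≤ (n.toNat : ENNReal) := by
  rw [← sum_one_Icc]
  exact Finset.sum_le_sum fun i _ => Set.indicator_le_self' (fun _ _ => zero_le) _

/-- Key identity for the dynamics. -/
lemma palm_T {muhat : Measure Cfg} [IsProbabilityMeasure muhat]
    (hsupp : ∀ᵐ η ∂muhat, η ∈ XhatSet) (hinv : muhat.map thetaHat = muhat)
    (hr : ∫⁻ η, ((rFirst η).toNat : ENNReal) ∂muhat < ⊤) {A : Set Cfg} (hA : MeasurableSet A) :
    ∫⁻ η, ∑ i ∈ Finset.Icc (1 : ℤ) (rFirst η),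
        A.indicator (fun _ => (1 : ENNReal)) (shiftBy i (bbsT η)) ∂muhat =
    ∫⁻ η, ∑ i ∈ Finset.Icc (1 : ℤ) (rFirst (That η)),
        A.indicator (fun _ => (1 : ENNReal)) (shiftBy i (That η)) ∂muhat := by
  have mT : ∀ i, Measurable fun η => A.indicator (fun _ => (1 : ENNReal)) (shiftBy i (bbsT η)) :=
    fun i => (meas_ind hA i).comp meas_bbsT
  refine coboundary meas_thetaHat hinv
    (H := fun η => ∑ i ∈ Finset.Icc (recPos (liftT (xi0 η)) 0 + 1) 0,
      A.indicator (fun _ => (1 : ENNReal)) (shiftBy i (bbsT η))) ?_ ?_ ?_ ?_ ?_ ?_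
  · exact meas_eval (g := fun η n => ∑ i ∈ Finset.Icc (1 : ℤ) n,
      A.indicator (fun _ => (1 : ENNReal)) (shiftBy i (bbsT η)))
      (fun n => Finset.measurable_sum _ fun i _ => mT i) meas_rFirst
  · exact (meas_palm hA).comp meas_That
  · exact meas_eval (g := fun η n => ∑ i ∈ Finset.Icc (n + 1) 0,
      A.indicator (fun _ => (1 : ENNReal)) (shiftBy i (bbsT η)))
      (fun n => Finset.measurable_sum _ fun i _ => mT i) meas_psi
  · intro η
    refine (ENNReal.sum_lt_top.2 fun i _ => ?_).ne
    exact lt_of_le_of_lt (Set.indicator_le_self' (fun _ _ => zero_le) _) ENNReal.one_lt_top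
  · refine ne_top_of_le_ne_top hr.ne (lintegral_mono fun η => ?_)
    exact palm_le A (fun i => shiftBy i (bbsT η)) _
  · filter_upwards [hsupp] with η hη
    obtain ⟨h1, h2, h3, h4, h5, h6⟩ := det_facts hη
    set a := recPos (liftT (xi0 η)) 0
    set b := recPos (liftT (xi0 η)) 1
    set r := rFirst η with hrdef
    set f : ℤ → ENNReal := fun i => A.indicator (fun _ => (1 : ENNReal)) (shiftBy i (bbsT η))
      with hf
    have eG : ∑ i ∈ Finset.Icc (1 : ℤ) (rFirst (That η)),
        A.indicator (fun _ => (1 : ENNReal)) (shiftBy i (That η)) =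
        ∑ i ∈ Finset.Icc (a + 1) b, f i := by
      rw [h5]
      have : ∀ i, A.indicator (fun _ => (1 : ENNReal)) (shiftBy i (That η)) = f (i + a) := by
        intro i
        simp only [hf, That, shiftBy_shiftBy]; rfl
      simp only [this]
      rw [sum_shift, add_comm 1 a, sub_add_cancel]
    have eH : ∑ i ∈ Finset.Icc (recPos (liftT (xi0 (thetaHat η))) 0 + 1) 0,
        A.indicator (fun _ => (1 : ENNReal)) (shiftBy i (bbsT (thetaHat η))) =
        ∑ i ∈ Finset.Icc (b + 1) r, f i := by
      rw [h6]
      have : ∀ i, A.indicator (fun _ => (1 : ENNReal)) (shiftBy i (bbsT (thetaHat η)))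
          = f (i + r) := by
        intro i
        simp only [hf, thetaHat, bbsT_shift, shiftBy_shiftBy]; rfl
      simp only [this]
      rw [sum_shift, zero_add, show b - r + 1 + r = b + 1 by ring]
    rw [eG, eH, ← sum_split f h3 h4, sum_split f h2 (by omega : 0 ≤ r), add_comm]
    rfl

lemma ind_pre (A : Set Cfg) (g : Cfg → Cfg) (η : Cfg) :
    (g ⁻¹' A).indicator (fun _ => (1 : ENNReal)) η = A.indicator (fun _ => (1 : ENNReal)) (g η) := by
  by_cases h : g η ∈ A
  · rw [Set.indicator_of_mem h, Set.indicator_of_mem (show η ∈ g ⁻¹' A from h)]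
  · rw [Set.indicator_of_notMem h, Set.indicator_of_notMem (show η ∉ g ⁻¹' A from h)]

open MeasureTheory in
/-- **inverse-Palm.** Let `μ̂` be a probability measure on `𝒳̂`
invariant under the record-shift `θ̂` with `μ̂(r) < ∞`, and let `μ` be its
inverse-Palm measure (any measure satisfying the Palm identity).  Then `μ` is
`θ`-invariant, supported on `𝒳`, and `Palm(μ̂) ∘ T⁻¹ = Palm(μ̂ ∘ T̂⁻¹)`. -/
theorem inverse_palm_properties (muhat : Measure Cfg) [IsProbabilityMeasure muhat]
    (hsupp : muhat XhatSet = 1) (hinv : muhat.map thetaHat = muhat)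
    (hr : ∫⁻ η, ((rFirst η).toNat : ENNReal) ∂muhat < ⊤)
    (mu : Measure Cfg) (hmu : PalmIdentity muhat mu) :
    mu.map shiftC = mu ∧ mu Xset = 1 ∧
      ∀ mu' : Measure Cfg, PalmIdentity (muhat.map That) mu' →
        mu.map bbsT = mu' := by
  have hae : ∀ᵐ η ∂muhat, η ∈ XhatSet := (prob_compl_eq_zero_iff meas_Xhat).2 hsupp
  have hrpos : ∫⁻ η, ((rFirst η).toNat : ENNReal) ∂muhat ≠ 0 := by
    have : (1 : ENNReal) ≤ ∫⁻ η, ((rFirst η).toNat : ENNReal) ∂muhat := by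
      calc (1 : ENNReal) = ∫⁻ _, 1 ∂muhat := by simp
        _ ≤ _ := by
          refine lintegral_mono_ae ?_
          filter_upwards [hae] with η hη
          have := (det_facts hη).1
          have h1 : 1 ≤ (rFirst η).toNat := by omega
          exact_mod_cast h1
    intro h0
    rw [h0] at this
    simp at this
  have mS : Measurable shiftC := meas_shiftBy 1
  refine ⟨?_, ?_, ?_⟩
  · ext A hA
    rw [Measure.map_apply mS hA, hmu _ (mS hA), hmu _ hA]
    congr 1
    have hfin : ∫⁻ η, A.indicator (fun _ => (1 : ENNReal)) (shiftBy 1 η) ∂muhat ≠ ⊤ := by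
      refine ne_top_of_le_ne_top ENNReal.one_ne_top ?_
      calc ∫⁻ η, A.indicator (fun _ => (1 : ENNReal)) (shiftBy 1 η) ∂muhat ≤ ∫⁻ _, (1 : ENNReal) ∂muhat :=
            lintegral_mono fun η => Set.indicator_le_self' (fun _ _ => zero_le) _
        _ = 1 := by simp
    have e1 : ∫⁻ η, A.indicator (fun _ => (1 : ENNReal)) (shiftBy 1 (thetaHat η)) ∂muhat =
        ∫⁻ η, A.indicator (fun _ => (1 : ENNReal)) (shiftBy 1 η) ∂muhat := by
      conv_rhs => rw [← hinv]
      rw [lintegral_map (meas_ind hA 1) meas_thetaHat]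
    refine (ENNReal.add_left_inj hfin).1 ?_
    conv_rhs => rw [← e1]
    rw [← lintegral_add_left (meas_palm (mS hA)), ← lintegral_add_left (meas_palm hA)]
    refine lintegral_congr_ae ?_
    filter_upwards [hae] with η hη
    have h1 := (det_facts hη).1
    set f : ℤ → ENNReal := fun i => A.indicator (fun _ => (1 : ENNReal)) (shiftBy i η) with hf
    have a1 : ∀ i, (shiftC ⁻¹' A).indicator (fun _ => (1 : ENNReal)) (shiftBy i η)
        = f (i + 1) := by
      intro i
      have : shiftC (shiftBy i η) = shiftBy (i + 1) η := by
        rw [add_comm, ← shiftBy_shiftBy]; rfl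
      rw [ind_pre, this]
    have a2 : A.indicator (fun _ => (1 : ENNReal)) (shiftBy 1 (thetaHat η))
        = f (rFirst η + 1) := by
      simp only [hf, thetaHat, shiftBy_shiftBy]
      rw [add_comm]
    rw [a2]
    simp only [a1]
    rw [sum_shift]
    have s1 := sum_split f (a := 0) (b := 1) (c := rFirst η + 1) (by omega) (by omega)
    have s2 := sum_split f (a := 0) (b := rFirst η) (c := rFirst η + 1) (by omega) (by omega)
    simp only [zero_add, Finset.Icc_self, Finset.sum_singleton] at s1 s2
    rw [← s2, s1, add_comm]
  · rw [hmu _ meas_Xset]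
    have : ∫⁻ η, ∑ i ∈ Finset.Icc (1 : ℤ) (rFirst η),
        Xset.indicator (fun _ => (1 : ENNReal)) (shiftBy i η) ∂muhat =
        ∫⁻ η, ((rFirst η).toNat : ENNReal) ∂muhat := by
      refine lintegral_congr_ae ?_
      filter_upwards [hae] with η hη
      rw [← sum_one_Icc]
      refine Finset.sum_congr rfl fun i _ => ?_
      rw [Set.indicator_of_mem]
      exact inX_shift i hη.1
    rw [this]
    exact ENNReal.inv_mul_cancel hrpos hr.ne
  · intro mu' hmu'
    ext A hA
    have mr : Measurable fun η => ((rFirst η).toNat : ENNReal) :=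
      (measurable_of_countable fun n : ℤ => (n.toNat : ENNReal)).comp meas_rFirst
    rw [Measure.map_apply meas_bbsT hA, hmu _ (meas_bbsT hA), hmu' _ hA,
      lintegral_map (meas_palm hA) meas_That,
      lintegral_map mr meas_That]
    congr 1
    · congr 1
      have := palm_T hae hinv hr MeasurableSet.univ
      simpa using this
    · rw [← palm_T hae hinv hr hA]
      refine lintegral_congr fun η => Finset.sum_congr rfl fun i _ => ?_
      rw [ind_pre, bbsT_shift]
end

section
/- Let μ̂ be a probability measure on X̂ that is invariant and ergodic under the record-shift θ̂, with μ̂(r) < ∞. Then the inverse-Palm measure Palm(μ̂) is ergodic under the shift θ. -/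
open MeasureTheory Filter Finset

lemma aux_sum_shift (f : ℤ → ENNReal) (n : ℕ) :
    ∑ i ∈ Finset.Icc (1 : ℤ) (n : ℤ), f (i + 1) + f 1
      = ∑ i ∈ Finset.Icc (1 : ℤ) (n : ℤ), f i + f (n + 1) := by
  induction n with
  | zero => simp
  | succ k ih =>
    have h : Finset.Icc (1 : ℤ) ((k + 1 : ℕ) : ℤ)
        = insert ((k : ℤ) + 1) (Finset.Icc (1 : ℤ) (k : ℤ)) := by
      ext x; simp only [Finset.mem_Icc, Finset.mem_insert]; push_cast; omega
    have hn : ((k : ℤ) + 1) ∉ Finset.Icc (1 : ℤ) (k : ℤ) := by simp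
    rw [h, Finset.sum_insert hn, Finset.sum_insert hn, add_assoc, ih]
    push_cast
    ring

lemma aux_r_nonneg (η : Cfg) : 0 ≤ rFirst η := by
  unfold rFirst
  rcases Set.eq_empty_or_nonempty {x : ℤ | 1 ≤ x ∧ isRecord η x} with h | h
  · rw [h]; simp
  · exact le_csInf h fun b hb => by have := hb.1; omega

lemma aux_shiftC_measurable : Measurable shiftC :=
  measurable_pi_lambda _ fun y => measurable_pi_apply (y + 1)

lemma aux_shiftC_shiftBy (i : ℤ) (η : Cfg) : shiftC (shiftBy i η) = shiftBy (i + 1) η := by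
  funext y; simp only [shiftC, shiftBy]; congr 1; ring

lemma aux_inv {A : Set Cfg} (hA : shiftC ⁻¹' A = A) (i : ℤ) (hi : 0 ≤ i) (η : Cfg) :
    shiftBy i η ∈ A ↔ η ∈ A := by
  obtain ⟨n, rfl⟩ := Int.eq_ofNat_of_zero_le hi
  induction n with
  | zero =>
    have : shiftBy ((0 : ℕ) : ℤ) η = η := by funext y; simp [shiftBy]
    rw [this]
  | succ k ih =>
    rw [← ih (by positivity)]
    conv_rhs => rw [← hA]
    rw [Set.mem_preimage, aux_shiftC_shiftBy]
    push_cast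
    rfl

open MeasureTheory in
lemma aux_null (muhat mu : Measure Cfg) (hmu : PalmIdentity muhat mu) {A : Set Cfg}
    (hAm : MeasurableSet A) (hA : shiftC ⁻¹' A = A) (h0 : muhat A = 0) : mu A = 0 := by
  rw [hmu A hAm]
  have : ∫⁻ η, ∑ i ∈ Finset.Icc (1 : ℤ) (rFirst η),
        A.indicator (fun _ => (1 : ENNReal)) (shiftBy i η) ∂muhat = ∫⁻ _, 0 ∂muhat := by
    apply lintegral_congr_ae
    have h : ∀ᵐ η ∂muhat, η ∉ A := measure_eq_zero_iff_ae_notMem.1 h0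
    filter_upwards [h] with η hη
    apply Finset.sum_eq_zero
    intro i hi
    have hi' := (Finset.mem_Icc.1 hi).1
    apply Set.indicator_of_notMem
    rwa [aux_inv hA i (by omega)]
  rw [this]; simp

open MeasureTheory in
/-- **ergodicity of the inverse-Palm measure.** Let `μ̂` be a
probability measure on `𝒳̂`, invariant and ergodic under the record-shift `θ̂`,
with `μ̂(r) < ∞`.  Then its inverse-Palm measure `Palm(μ̂)` is ergodic under the
shift `θ`. -/
theorem inverse_palm_ergodic (muhat : Measure Cfg) [IsProbabilityMeasure muhat]
    (hsupp : muhat XhatSet = 1) (herg : Ergodic thetaHat muhat)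
    (hr : ∫⁻ η, ((rFirst η).toNat : ENNReal) ∂muhat < ⊤)
    (mu : Measure Cfg) (hmu : PalmIdentity muhat mu) :
    Ergodic shiftC mu := by
  refine { measurable := aux_shiftC_measurable, map_eq := ?_, aeconst_set := ?_ }
  · ext A hA
    rw [Measure.map_apply aux_shiftC_measurable hA,
      hmu _ (aux_shiftC_measurable hA), hmu A hA]
    congr 1
    set g : Cfg → ENNReal := fun η => A.indicator (fun _ => (1 : ENNReal)) (shiftC η) with hg
    have hgm : Measurable g :=
      (measurable_const.indicator hA).comp aux_shiftC_measurable
    have hgfin : ∫⁻ η, g η ∂muhat ≠ ⊤ := by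
      have : ∫⁻ η, g η ∂muhat ≤ ∫⁻ _, 1 ∂muhat :=
        lintegral_mono fun η => Set.indicator_le_self' (fun _ _ => zero_le) _
      exact ne_top_of_le_ne_top (by simp) this
    have hinv : ∫⁻ η, g (thetaHat η) ∂muhat = ∫⁻ η, g η ∂muhat :=
      herg.toMeasurePreserving.lintegral_comp hgm
    have hgm2 : Measurable (fun η => g (thetaHat η)) := hgm.comp herg.measurable
    refine (ENNReal.add_left_inj hgfin).1 ?_
    conv_rhs => rw [← hinv]
    rw [← lintegral_add_right _ hgm,
      ← lintegral_add_right _ hgm2]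
    apply lintegral_congr
    intro η
    obtain ⟨n, hn⟩ := Int.eq_ofNat_of_zero_le (aux_r_nonneg η)
    have h := aux_sum_shift
      (fun i => A.indicator (fun _ => (1 : ENNReal)) (shiftBy i η)) n
    have e1 : g (thetaHat η) = A.indicator (fun _ => (1 : ENNReal)) (shiftBy (n + 1) η) := by
      simp only [hg, thetaHat, aux_shiftC_shiftBy, hn]
    have e2 : g η = A.indicator (fun _ => (1 : ENNReal)) (shiftBy 1 η) := rfl
    have e3 : ∀ i, (shiftC ⁻¹' A).indicator (fun _ => (1 : ENNReal)) (shiftBy i η)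
        = A.indicator (fun _ => (1 : ENNReal)) (shiftBy (i + 1) η) := by
      intro i
      rw [← aux_shiftC_shiftBy]
      rfl
    rw [e1, e2, hn]
    simp only [e3]
    exact h
  · intro A hAm hA
    have hhat : thetaHat ⁻¹' A = A := by
      ext η
      exact aux_inv hA _ (aux_r_nonneg η) η
    have hc := herg.aeconst_set hAm hhat
    rw [Filter.eventuallyConst_set'] at hc ⊢
    rcases hc with h | h
    · left
      exact ae_eq_empty.2 (aux_null muhat mu hmu hAm hA (ae_eq_empty.1 h))
    · right
      refine ae_eq_univ.2 (aux_null muhat mu hmu hAm.compl ?_ (ae_eq_univ.1 h))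
      rw [Set.preimage_compl, hA]
end
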